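/- Let S be a connected quasi-hereditary algebra with a simple-preserving duality whose partial order is minimal for the quasi-hereditary structure. If S satisfies property C (wfd(∇(λ)) = gfd(S) − inj(∇(λ)) for all λ), then property B (μ < λ implies wfd(∇(μ)) ≤ wfd(∇(λ))) holds if and only if property E (μ < λ implies inj(∇(μ)) ≥ inj(∇(λ))) holds. -/

import Mathlib

/-!
Common definitions for formalizing "On the global and ∇-filtration dimensions of
quasi-hereditary algebras" by Erdmann and Parker.

We work with a finite-dimensional algebra `S` over a field `k`; since `S` is
finite dimensional over `k`, the finite-dimensional `S`-modules are exactly the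
finitely generated ones, so we express finite-dimensionality of a module `M` as
`Module.Finite S M`.
-/

open CategoryTheory

namespace QHPaper

variable (S : Type) [Ring S]

/-- The subquotient `B ⧸ A` associated to two submodules `A B` of `M`. -/
abbrev subquot {M : ModuleCat.{0} S} (A B : Submodule S ↥M) : Type :=
  ↥B ⧸ (Submodule.comap B.subtype A)

/-- A filtration `⊥ = f 0 ≤ f 1 ≤ ⋯ ≤ f n = ⊤` of `M` whose `i`-th section
`f (i+1) / f i` is isomorphic to the prescribed module `D i`. -/
def HasFiltrationWithSections (M : ModuleCat.{0} S) (n : ℕ)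
    (f : Fin (n + 1) → Submodule S ↥M) (D : Fin n → ModuleCat.{0} S) : Prop :=
  Monotone f ∧ f 0 = ⊥ ∧ f (Fin.last n) = ⊤ ∧
    ∀ i : Fin n, Nonempty ((subquot S (f i.castSucc) (f i.succ)) ≃ₗ[S] ↥(D i))

/-- `L` occurs as a (simple) subquotient of `M`; for `L` simple this says that `L`
is a composition factor of `M`. -/
def IsCompFactor (L M : ModuleCat.{0} S) : Prop :=
  ∃ (A B : Submodule S ↥M), A ≤ B ∧ Nonempty ((subquot S A B) ≃ₗ[S] ↥L)

/-- `L` occurs with multiplicity `m` among the sections of a composition series of `M`. -/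
def CompFactorMult (L M : ModuleCat.{0} S) (m : ℕ) : Prop :=
  ∃ (n : ℕ) (f : Fin (n + 1) → Submodule S ↥M),
    Monotone f ∧ f 0 = ⊥ ∧ f (Fin.last n) = ⊤ ∧
    (∀ i : Fin n, IsSimpleModule S (subquot S (f i.castSucc) (f i.succ))) ∧
    Nat.card {i : Fin n // Nonempty ((subquot S (f i.castSucc) (f i.succ)) ≃ₗ[S] ↥L)} = m

/-- `P` is a projective cover of `M`: `P` is projective and there is a surjection
`P → M` whose kernel is superfluous in `P`. -/
def IsProjCover (P M : ModuleCat.{0} S) : Prop :=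
  Module.Projective S ↥P ∧ ∃ π : ↥P →ₗ[S] ↥M, Function.Surjective π ∧
    ∀ N : Submodule S ↥P, N ⊔ LinearMap.ker π = ⊤ → N = ⊤

/-- `I` is an injective hull of `M`: `I` is injective and there is an injection
`M → I` with essential image. -/
def IsInjHull (I M : ModuleCat.{0} S) : Prop :=
  Module.Injective S ↥I ∧ ∃ ι : ↥M →ₗ[S] ↥I, Function.Injective ι ∧
    ∀ N : Submodule S ↥I, N ⊓ LinearMap.range ι = ⊥ → N = ⊥

/-- The data of a quasi-hereditary algebra structure on `S` with weight poset `Λ`: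
a full set `L` of pairwise non-isomorphic simple modules, their projective covers `P`
and injective hulls `I`, the standard modules `std` (largest quotient of `P lam` with
all composition factors `L mu`, `mu ≤ lam`), the costandard modules `costd`
(largest submodule of `I lam` with all composition factors `L mu`, `mu ≤ lam`),
such that `L lam` occurs exactly once in `std lam` and `P lam` is filtered by
standard modules `std mu` with `mu ≥ lam`, with `std lam` occurring exactly once. -/
structure QHData (Λ : Type) [Fintype Λ] [PartialOrder Λ] where
  L : Λ → ModuleCat.{0} S
  P : Λ → ModuleCat.{0} S
  I : Λ → ModuleCat.{0} S
  std : Λ → ModuleCat.{0} S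
  costd : Λ → ModuleCat.{0} S
  finiteL : ∀ lam, Module.Finite S ↥(L lam)
  simpleL : ∀ lam, IsSimpleModule S ↥(L lam)
  nonisoL : ∀ lam mu, lam ≠ mu → IsEmpty (↥(L lam) ≃ₗ[S] ↥(L mu))
  fullL : ∀ M : ModuleCat.{0} S, IsSimpleModule S ↥M → ∃ lam, Nonempty (↥M ≃ₗ[S] ↥(L lam))
  projCover : ∀ lam, IsProjCover S (P lam) (L lam)
  injHull : ∀ lam, IsInjHull S (I lam) (L lam)
  stdSpec : ∀ lam, ∃ K : Submodule S ↥(P lam),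
    Nonempty (↥(std lam) ≃ₗ[S] (↥(P lam) ⧸ K)) ∧
    (∀ mu, IsCompFactor S (L mu) (ModuleCat.of S (↥(P lam) ⧸ K)) → mu ≤ lam) ∧
    ∀ K' : Submodule S ↥(P lam),
      (∀ mu, IsCompFactor S (L mu) (ModuleCat.of S (↥(P lam) ⧸ K')) → mu ≤ lam) → K ≤ K'
  costdSpec : ∀ lam, ∃ V : Submodule S ↥(I lam),
    Nonempty (↥(costd lam) ≃ₗ[S] ↥V) ∧
    (∀ mu, IsCompFactor S (L mu) (ModuleCat.of S ↥V) → mu ≤ lam) ∧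
    ∀ V' : Submodule S ↥(I lam),
      (∀ mu, IsCompFactor S (L mu) (ModuleCat.of S ↥V') → mu ≤ lam) → V' ≤ V
  multOne : ∀ lam, CompFactorMult S (L lam) (std lam) 1
  projFilt : ∀ lam, ∃ (n : ℕ) (f : Fin (n + 1) → Submodule S ↥(P lam)) (g : Fin n → Λ),
    HasFiltrationWithSections S (P lam) n f (fun i => std (g i)) ∧
    (∀ i, lam ≤ g i) ∧ Nat.card {i : Fin n // g i = lam} = 1

variable {Λ : Type} [Fintype Λ] [PartialOrder Λ]

/-- `M` has a filtration with costandard sections, i.e. `M ∈ F(∇)`. -/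
def InCostdFilt (Q : QHData S Λ) (M : ModuleCat.{0} S) : Prop :=
  ∃ (n : ℕ) (f : Fin (n + 1) → Submodule S ↥M) (g : Fin n → Λ),
    HasFiltrationWithSections S M n f (fun i => Q.costd (g i))

/-- `M` has a filtration with standard sections, i.e. `M ∈ F(Δ)`. -/
def InStdFilt (Q : QHData S Λ) (M : ModuleCat.{0} S) : Prop :=
  ∃ (n : ℕ) (f : Fin (n + 1) → Submodule S ↥M) (g : Fin n → Λ),
    HasFiltrationWithSections S M n f (fun i => Q.std (g i))

/-- `0 → N 0 → N 1 → ⋯ → N (n+1) → 0` is exact. -/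
def IsExactSeq (n : ℕ) (N : Fin (n + 2) → ModuleCat.{0} S)
    (f : ∀ i : Fin (n + 1), ↥(N i.castSucc) →ₗ[S] ↥(N i.succ)) : Prop :=
  Function.Injective (f 0) ∧ Function.Surjective (f (Fin.last n)) ∧
    ∀ i : Fin n, LinearMap.range (f i.castSucc) = LinearMap.ker (f i.succ)

/-- `M` has a ∇-resolution (co-resolution by modules in `F(∇)`) of length `d`:
`0 → M → M₀ → ⋯ → M_d → 0` with each `Mᵢ ∈ F(∇)`. -/
def GfdLE (Q : QHData S Λ) (M : ModuleCat.{0} S) (d : ℕ) : Prop :=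
  ∃ (N : Fin (d + 2) → ModuleCat.{0} S)
    (f : ∀ i : Fin (d + 1), ↥(N i.castSucc) →ₗ[S] ↥(N i.succ)),
    IsExactSeq S d N f ∧ N 0 = M ∧ ∀ i : Fin (d + 1), InCostdFilt S Q (N i.succ)

/-- The ∇-filtration dimension (good filtration dimension) of a module. -/
noncomputable def gfd (Q : QHData S Λ) (M : ModuleCat.{0} S) : ℕ :=
  sInf {d | GfdLE S Q M d}

/-- `M` has a resolution `0 → M_d → ⋯ → M₀ → M → 0` with each `Mᵢ ∈ F(Δ)`. -/
def WfdLE (Q : QHData S Λ) (M : ModuleCat.{0} S) (d : ℕ) : Prop :=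
  ∃ (N : Fin (d + 2) → ModuleCat.{0} S)
    (f : ∀ i : Fin (d + 1), ↥(N i.castSucc) →ₗ[S] ↥(N i.succ)),
    IsExactSeq S d N f ∧ N (Fin.last (d + 1)) = M ∧
    ∀ i : Fin (d + 1), InStdFilt S Q (N i.castSucc)

/-- The Δ-filtration dimension of a module. -/
noncomputable def wfd (Q : QHData S Λ) (M : ModuleCat.{0} S) : ℕ :=
  sInf {d | WfdLE S Q M d}

/-- `M` has a projective resolution of length `d`. -/
def ProjdimLE (M : ModuleCat.{0} S) (d : ℕ) : Prop :=
  ∃ (N : Fin (d + 2) → ModuleCat.{0} S)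
    (f : ∀ i : Fin (d + 1), ↥(N i.castSucc) →ₗ[S] ↥(N i.succ)),
    IsExactSeq S d N f ∧ N (Fin.last (d + 1)) = M ∧
    ∀ i : Fin (d + 1), Module.Projective S ↥(N i.castSucc)

/-- The projective dimension of a module. -/
noncomputable def projdim (M : ModuleCat.{0} S) : ℕ :=
  sInf {d | ProjdimLE S M d}

/-- `M` has an injective resolution of length `d`. -/
def InjdimLE (M : ModuleCat.{0} S) (d : ℕ) : Prop :=
  ∃ (N : Fin (d + 2) → ModuleCat.{0} S)
    (f : ∀ i : Fin (d + 1), ↥(N i.castSucc) →ₗ[S] ↥(N i.succ)),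
    IsExactSeq S d N f ∧ N 0 = M ∧
    ∀ i : Fin (d + 1), Module.Injective S ↥(N i.succ)

/-- The injective dimension of a module. -/
noncomputable def injdim (M : ModuleCat.{0} S) : ℕ :=
  sInf {d | InjdimLE S M d}

/-- `gfd(S)`: the supremum of the ∇-filtration dimensions of all
finite-dimensional `S`-modules. -/
noncomputable def gfdAlg (Q : QHData S Λ) : ℕ :=
  sSup {d | ∃ M : ModuleCat.{0} S, Module.Finite S ↥M ∧ gfd S Q M = d}

/-- `wfd(S)`: the supremum of the Δ-filtration dimensions of all
finite-dimensional `S`-modules. -/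
noncomputable def wfdAlg (Q : QHData S Λ) : ℕ :=
  sSup {d | ∃ M : ModuleCat.{0} S, Module.Finite S ↥M ∧ wfd S Q M = d}

/-- The global dimension of `S`: the supremum of the projective dimensions of all
finite-dimensional `S`-modules. -/
noncomputable def globdim : ℕ :=
  sSup {d | ∃ M : ModuleCat.{0} S, Module.Finite S ↥M ∧ projdim S M = d}

/-- `Ext^n_S(A, B) ≠ 0`. -/
noncomputable def extNe (A B : ModuleCat.{0} S) (n : ℕ) : Prop :=
  Nontrivial ↥(((Ext ℤ (ModuleCat.{0} S) n).obj (Opposite.op A)).obj B)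

/-- A simple-preserving duality on `S`: a contravariant, exact, fully faithful,
additive self-functor `D` on the category of finite-dimensional `S`-modules with
`D (D M) ≅ M` and `D (L lam) ≅ L lam` for all `lam`. -/
structure Duality (Q : QHData S Λ) where
  D : ModuleCat.{0} S → ModuleCat.{0} S
  Dmap : ∀ {A B : ModuleCat.{0} S}, (↥A →ₗ[S] ↥B) → (↥(D B) →ₗ[S] ↥(D A))
  finD : ∀ M : ModuleCat.{0} S, Module.Finite S ↥M → Module.Finite S ↥(D M)
  Did : ∀ A : ModuleCat.{0} S, Module.Finite S ↥A →
    Dmap (LinearMap.id : ↥A →ₗ[S] ↥A) = LinearMap.id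
  Dcomp : ∀ {A B C : ModuleCat.{0} S}, Module.Finite S ↥A → Module.Finite S ↥B →
    Module.Finite S ↥C → ∀ (f : ↥A →ₗ[S] ↥B) (g : ↥B →ₗ[S] ↥C),
      Dmap (g ∘ₗ f) = Dmap f ∘ₗ Dmap g
  Dadd : ∀ {A B : ModuleCat.{0} S}, Module.Finite S ↥A → Module.Finite S ↥B →
    ∀ (f g : ↥A →ₗ[S] ↥B), Dmap (f + g) = Dmap f + Dmap g
  Dfull : ∀ {A B : ModuleCat.{0} S}, Module.Finite S ↥A → Module.Finite S ↥B →
    Function.Bijective (fun f : ↥A →ₗ[S] ↥B => Dmap f)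
  Dexact : ∀ {A B C : ModuleCat.{0} S}, Module.Finite S ↥A → Module.Finite S ↥B →
    Module.Finite S ↥C → ∀ (f : ↥A →ₗ[S] ↥B) (g : ↥B →ₗ[S] ↥C),
      Function.Injective f → Function.Surjective g →
      LinearMap.range f = LinearMap.ker g →
      Function.Injective (Dmap g) ∧ Function.Surjective (Dmap f) ∧
        LinearMap.range (Dmap g) = LinearMap.ker (Dmap f)
  Dinvol : ∀ M : ModuleCat.{0} S, Module.Finite S ↥M → Nonempty (↥(D (D M)) ≃ₗ[S] ↥M)
  DL : ∀ lam, Nonempty (↥(D (Q.L lam)) ≃ₗ[S] ↥(Q.L lam))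

/-- Strong property A: `mu < lam` implies `gfd (L mu) < gfd (L lam)`. -/
def StrongPropA (Q : QHData S Λ) : Prop :=
  ∀ mu lam : Λ, mu < lam → gfd S Q (Q.L mu) < gfd S Q (Q.L lam)

/-- Property A: `mu < lam` implies `gfd (L mu) ≤ gfd (L lam)`. -/
def PropA (Q : QHData S Λ) : Prop :=
  ∀ mu lam : Λ, mu < lam → gfd S Q (Q.L mu) ≤ gfd S Q (Q.L lam)

/-- Property B: `mu < lam` implies `wfd (∇ mu) ≤ wfd (∇ lam)`. -/
def PropB (Q : QHData S Λ) : Prop :=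
  ∀ mu lam : Λ, mu < lam → wfd S Q (Q.costd mu) ≤ wfd S Q (Q.costd lam)

/-- Property C: `wfd (∇ lam) = gfd S - inj (∇ lam)` for all `lam`. -/
def PropC (Q : QHData S Λ) : Prop :=
  ∀ lam : Λ, wfd S Q (Q.costd lam) = gfdAlg S Q - injdim S (Q.costd lam)

/-- Property D: `wfd (∇ lam) = wfd (L lam)` for all `lam`. -/
def PropD (Q : QHData S Λ) : Prop :=
  ∀ lam : Λ, wfd S Q (Q.costd lam) = wfd S Q (Q.L lam)

/-- Property E: `mu < lam` implies `inj (∇ mu) ≥ inj (∇ lam)`. -/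
def PropE (Q : QHData S Λ) : Prop :=
  ∀ mu lam : Λ, mu < lam → injdim S (Q.costd lam) ≤ injdim S (Q.costd mu)

/-- The partial order is minimal for the quasi-hereditary structure: whenever
`mu < lam` are adjacent, `L mu` is a composition factor of `Δ lam` or of `∇ lam`. -/
def MinimalOrder (Q : QHData S Λ) : Prop :=
  ∀ mu lam : Λ, mu < lam → (¬ ∃ nu, mu < nu ∧ nu < lam) →
    IsCompFactor S (Q.L mu) (Q.std lam) ∨ IsCompFactor S (Q.L mu) (Q.costd lam)

/-- `S` is connected (indecomposable as an algebra, i.e. one block): the only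
central idempotents are `0` and `1`. -/
def ConnectedRing : Prop :=
  ∀ c : S, c * c = c → (∀ s : S, c * s = s * c) → c = 0 ∨ c = 1

/-- A tilting module: a module in `F(Δ) ∩ F(∇)`. -/
def IsTilting (Q : QHData S Λ) (T : ModuleCat.{0} S) : Prop :=
  InStdFilt S Q T ∧ InCostdFilt S Q T

/-- The indecomposable tilting module `T(lam)`: an indecomposable tilting module in
which `L lam` occurs exactly once and all other composition factors `L mu` have
`mu < lam`. -/
def IsIndecTilting (Q : QHData S Λ) (lam : Λ) (T : ModuleCat.{0} S) : Prop :=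
  IsTilting S Q T ∧ Nontrivial ↥T ∧
    (∀ A B : Submodule S ↥T, IsCompl A B → A = ⊥ ∨ B = ⊥) ∧
    CompFactorMult S (Q.L lam) T 1 ∧
    ∀ mu, IsCompFactor S (Q.L mu) T → mu = lam ∨ mu < lam

/-- A full tilting module: a (finite-dimensional) tilting module having every
indecomposable tilting module as a direct summand. -/
def IsFullTilting (Q : QHData S Λ) (T : ModuleCat.{0} S) : Prop :=
  IsTilting S Q T ∧ Module.Finite S ↥T ∧
    ∀ (lam : Λ) (Tl : ModuleCat.{0} S), IsIndecTilting S Q lam Tl →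
      ∃ Cc : ModuleCat.{0} S, Nonempty (↥T ≃ₗ[S] (↥Tl × ↥Cc))

/-- The Ringel dual ring `S' = End_S(T)^op`. -/
abbrev RingelDualRing (T : ModuleCat.{0} S) : Type := (Module.End S ↥T)ᵐᵒᵖ

/-- `Hom_S(T, X)` is a module over `S' = End_S(T)^op` via `f • φ = φ ∘ f`. -/
instance homTModule (T X : ModuleCat.{0} S) :
    Module (RingelDualRing S T) (↥T →ₗ[S] ↥X) where
  smul a φ := φ ∘ₗ a.unop
  one_smul φ := rfl
  mul_smul a b φ := rfl
  smul_zero a := rfl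
  smul_add a φ ψ := rfl
  add_smul a b φ := by
    ext x
    show φ ((a.unop + b.unop) x) = φ (a.unop x) + φ (b.unop x)
    rw [LinearMap.add_apply, map_add]
  zero_smul φ := by
    ext x
    show φ ((0 : Module.End S ↥T) x) = 0
    rw [LinearMap.zero_apply, map_zero]

/-- The `S'`-module `Hom_S(T, X)`, i.e. the image of `X` under the functor
`F = Hom_S(T, -)`. -/
noncomputable def homTMod (T X : ModuleCat.{0} S) :
    ModuleCat.{0} (RingelDualRing S T) :=
  ModuleCat.of (RingelDualRing S T) (↥T →ₗ[S] ↥X)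

/-- `Q'` is a Ringel dual quasi-hereditary structure for `(Q, T)`:
`T` is a full tilting module, `Q'` is a quasi-hereditary structure on
`S' = End_S(T)^op` for the opposite poset, and its standard modules are
`Δ'(lam) = Hom_S(T, ∇(lam))`. -/
def IsRingelDualData (Q : QHData S Λ) (T : ModuleCat.{0} S)
    (Q' : QHData (RingelDualRing S T) Λᵒᵈ) : Prop :=
  IsFullTilting S Q T ∧
    ∀ lam : Λ, Nonempty
      (↥(Q'.std (OrderDual.toDual lam)) ≃ₗ[RingelDualRing S T]
        (↥T →ₗ[S] ↥(Q.costd lam)))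

/-- `0 → T_d → ⋯ → T_0 → M → 0` exact with all `T_i` tilting modules. -/
def TiltResLE (Q : QHData S Λ) (M : ModuleCat.{0} S) (d : ℕ) : Prop :=
  ∃ (N : Fin (d + 2) → ModuleCat.{0} S)
    (f : ∀ i : Fin (d + 1), ↥(N i.castSucc) →ₗ[S] ↥(N i.succ)),
    IsExactSeq S d N f ∧ N (Fin.last (d + 1)) = M ∧
    ∀ i : Fin (d + 1), IsTilting S Q (N i.castSucc)

/-- An idempotent `e` is primitive if it is nonzero and is not the sum of two
nonzero orthogonal idempotents. -/
def IsPrimitiveIdempotent (e : S) : Prop :=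
  e * e = e ∧ e ≠ 0 ∧ ∀ a b : S, a * a = a → b * b = b → a * b = 0 → b * a = 0 →
    e = a + b → a = 0 ∨ b = 0

/-- The additive subgroup `e•M = {m | e • m = m}` of `M` (for `e` idempotent). -/
def cornerSet (eG : S) (M : ModuleCat.{0} S) : AddSubgroup ↥M where
  carrier := {m | eG • m = m}
  add_mem' := by
    intro a b ha hb
    simp only [Set.mem_setOf_eq] at *
    rw [smul_add, ha, hb]
  zero_mem' := by
    simp only [Set.mem_setOf_eq]
    rw [smul_zero]
  neg_mem' := by
    intro a ha
    simp only [Set.mem_setOf_eq] at *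
    rw [smul_neg, ha]

/-- The `R`-module structure on `e•M`, where `ι : R → S` identifies `R` with the
corner ring `eSe` (as a non-unital ring, with `ι 1 = e`). -/
def cornerModuleStructure (R : Type) [Ring R] (ι : R →ₙ+* S) (eG : S)
    (hone : ι 1 = eG) (hrange : ∀ r : R, eG * ι r * eG = ι r)
    (M : ModuleCat.{0} S) : Module R ↥(cornerSet S eG M) where
  smul r m := ⟨ι r • (m : ↥M), by
    have hm : eG • (m : ↥M) = (m : ↥M) := m.2
    show eG • (ι r • (m : ↥M)) = ι r • (m : ↥M)
    have h : eG • (ι r • (m : ↥M)) = (eG * ι r * eG) • (m : ↥M) := by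
      rw [mul_assoc, mul_smul, mul_smul, hm]
    rw [h, hrange]⟩
  one_smul m := by
    apply Subtype.ext
    show ι 1 • (m : ↥M) = (m : ↥M)
    rw [hone]
    exact m.2
  mul_smul r s m := by
    apply Subtype.ext
    show ι (r * s) • (m : ↥M) = ι r • (ι s • (m : ↥M))
    rw [map_mul, mul_smul]
  smul_zero r := by
    apply Subtype.ext
    show ι r • (0 : ↥M) = 0
    rw [smul_zero]
  smul_add r m n := by
    apply Subtype.ext
    show ι r • ((m : ↥M) + (n : ↥M)) = ι r • (m : ↥M) + ι r • (n : ↥M)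
    rw [smul_add]
  add_smul r s m := by
    apply Subtype.ext
    show ι (r + s) • (m : ↥M) = ι r • (m : ↥M) + ι s • (m : ↥M)
    rw [map_add, add_smul]
  zero_smul m := by
    apply Subtype.ext
    show ι 0 • (m : ↥M) = 0
    rw [map_zero, zero_smul]

/-- The `R`-module `e•M`, where `R ≅ eSe` via `ι`. -/
noncomputable def cornerMod (R : Type) [Ring R] (ι : R →ₙ+* S) (eG : S)
    (hone : ι 1 = eG) (hrange : ∀ r : R, eG * ι r * eG = ι r)
    (M : ModuleCat.{0} S) : ModuleCat.{0} R :=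
  @ModuleCat.of R _ ↥(cornerSet S eG M) _
    (cornerModuleStructure S R ι eG hone hrange M)

end QHPaper

/-!
Under property C, writing `g = gfd(S)`, the inequality `wfd(∇(μ)) ≤ wfd(∇(λ))` reads
`g - inj(∇(μ)) ≤ g - inj(∇(λ))`. In the truncated arithmetic of `ℕ` this is equivalent to
`inj(∇(λ)) ≤ inj(∇(μ))` once `inj(∇(λ)) ≤ g` for all `λ`, and that bound is where the duality
enters.

Since `S` has finite global dimension, the duality turns finite projective resolutions into
uniformly bounded coresolutions by injective modules, which have costandard filtrations; so `g` is
a genuine maximum. As `Ext^n(Δ(λ), ∇(μ)) = 0` for `n > 0`, dimension shifting along a costandard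
coresolution gives `Ext^n(Δ(λ), Y) = 0` for `n > g` and every finite module `Y`. Hence `Δ(λ)` has a
projective resolution of length `g`, and its dual is an injective coresolution of `Δ(λ)° ≅ ∇(λ)` of
length `g`.
-/

namespace QHPaper

universe u

section Extensions

variable {R : Type u} [Ring R] {A B M : ModuleCat.{u} R}

/-- There is a short exact sequence `0 → A → M → B → 0`. -/
def IsExtension (A M B : ModuleCat.{u} R) : Prop :=
  ∃ (i : A →ₗ[R] M) (p : M →ₗ[R] B),
    Function.Injective i ∧ Function.Surjective p ∧ Function.Exact i p

namespace IsExtension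

theorem of_ker (p : M →ₗ[R] B) (hp : Function.Surjective p) :
    IsExtension (ModuleCat.of R (LinearMap.ker p)) M B :=
  ⟨(LinearMap.ker p).subtype, p, Submodule.injective_subtype _, hp, p.exact_subtype_ker_map⟩

theorem of_submodule (N : Submodule R M) :
    IsExtension (ModuleCat.of R N) M (ModuleCat.of R (M ⧸ N)) :=
  ⟨N.subtype, N.mkQ, N.injective_subtype, N.mkQ_surjective, LinearMap.exact_subtype_mkQ N⟩

theorem of_le {N N' : Submodule R M} (h : N ≤ N') :
    IsExtension (ModuleCat.of R N) (ModuleCat.of R N')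
      (ModuleCat.of R (N' ⧸ N.comap N'.subtype)) := by
  refine ⟨Submodule.inclusion h, (N.comap N'.subtype).mkQ, Submodule.inclusion_injective h,
    Submodule.mkQ_surjective _, LinearMap.exact_iff.mpr ?_⟩
  rw [Submodule.ker_mkQ, Submodule.range_inclusion]

theorem congr {A' M' B' : ModuleCat.{u} R} (h : IsExtension A M B) (eA : A ≃ₗ[R] A')
    (eM : M ≃ₗ[R] M') (eB : B ≃ₗ[R] B') : IsExtension A' M' B' := by
  obtain ⟨i, p, hi, hp, hip⟩ := h
  refine ⟨(eM.toLinearMap ∘ₗ i) ∘ₗ eA.symm.toLinearMap,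
    eB.toLinearMap ∘ₗ p ∘ₗ eM.symm.toLinearMap, by simpa using hi, by simpa using hp, ?_⟩
  rwa [LinearEquiv.precomp_exact_iff_exact, LinearEquiv.postcomp_exact_iff_exact,
    LinearEquiv.conj_exact_iff_exact]

theorem refl_of_subsingleton [Subsingleton A] : IsExtension A B B :=
  ⟨0, LinearMap.id, Function.injective_of_subsingleton _, Function.surjective_id,
    (LinearMap.exact_zero_iff_injective A _).mpr Function.injective_id⟩

theorem finite_left [IsNoetherianRing R] (h : IsExtension A M B) (hM : Module.Finite R M) :
    Module.Finite R A := by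
  obtain ⟨i, -, hi, -⟩ := h
  exact Module.Finite.of_injective i hi

theorem exists_shortExact (h : IsExtension A M B) :
    ∃ T : ShortComplex (ModuleCat.{u} R), T.ShortExact ∧ T.X₁ = A ∧ T.X₂ = M ∧ T.X₃ = B := by
  obtain ⟨i, p, hi, hp, hip⟩ := h
  exact ⟨ModuleCat.shortComplexOfCompEqZero i p hip.linearMap_comp_eq_zero,
    ModuleCat.shortComplex_shortExact _ hip hi hp, rfl, rfl, rfl⟩

end IsExtension

end Extensions

/-! ### Vanishing of extension groups -/

section ExtVanishing

variable {R : Type u} [Ring R] {A B M X Y : ModuleCat.{u} R} {n : ℕ}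

/-- `Ext^n(X, Y) = 0`, with Mathlib's Yoneda `Ext` of the abelian category of modules. -/
abbrev ExtVanishes (X Y : ModuleCat.{u} R) (n : ℕ) : Prop :=
  Subsingleton (Abelian.Ext.{u} X Y n)

theorem extVanishes_zero_iff : ExtVanishes X Y 0 ↔ ∀ f : X →ₗ[R] Y, f = 0 := by
  rw [ExtVanishes, Abelian.Ext.homEquiv₀.subsingleton_congr,
    ModuleCat.homEquiv.subsingleton_congr]
  exact subsingleton_iff_forall_eq 0

theorem extVanishes_of_projective (hX : Module.Projective R X) : ExtVanishes X Y (n + 1) := by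
  have := (IsProjective.iff_projective X).mp hX
  exact Abelian.Ext.subsingleton_of_projective (P := X) Y n

theorem extVanishes_of_injective (hY : Module.Injective R Y) : ExtVanishes X Y (n + 1) := by
  have := (Module.injective_iff_injective_object R Y).mp hY
  exact Abelian.Ext.subsingleton_of_injective X (I := Y) n

namespace IsExtension

theorem extVanishes_middle (h : IsExtension A M B) (hA : ExtVanishes A Y n)
    (hB : ExtVanishes B Y n) : ExtVanishes M Y n := by
  obtain ⟨T, hT, rfl, rfl, rfl⟩ := h.exists_shortExact
  refine subsingleton_of_forall_eq 0 fun x => ?_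
  obtain ⟨y, rfl⟩ := Abelian.Ext.contravariant_sequence_exact₂ hT Y x (Subsingleton.elim _ _)
  rw [Subsingleton.elim y 0, Abelian.Ext.comp_zero]

theorem extVanishes_right (h : IsExtension A M B) (hA : ExtVanishes A Y n)
    (hM : ExtVanishes M Y (n + 1)) : ExtVanishes B Y (n + 1) := by
  obtain ⟨T, hT, rfl, rfl, rfl⟩ := h.exists_shortExact
  refine subsingleton_of_forall_eq 0 fun x => ?_
  obtain ⟨y, rfl⟩ := Abelian.Ext.contravariant_sequence_exact₃ hT Y x (Subsingleton.elim _ _)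
    (add_comm 1 n)
  rw [Subsingleton.elim y 0, Abelian.Ext.comp_zero]

theorem extVanishes_left (h : IsExtension A M B) (hM : ExtVanishes M Y n)
    (hB : ExtVanishes B Y (n + 1)) : ExtVanishes A Y n := by
  obtain ⟨T, hT, rfl, rfl, rfl⟩ := h.exists_shortExact
  refine subsingleton_of_forall_eq 0 fun x => ?_
  obtain ⟨y, rfl⟩ := Abelian.Ext.contravariant_sequence_exact₁ hT Y x (add_comm 1 n)
    (Subsingleton.elim _ _)
  rw [Subsingleton.elim y 0, Abelian.Ext.comp_zero]

theorem extVanishes_to_middle (h : IsExtension A M B) (hA : ExtVanishes X A n)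
    (hB : ExtVanishes X B n) : ExtVanishes X M n := by
  obtain ⟨T, hT, rfl, rfl, rfl⟩ := h.exists_shortExact
  refine subsingleton_of_forall_eq 0 fun x => ?_
  obtain ⟨y, rfl⟩ := Abelian.Ext.covariant_sequence_exact₂ X hT x (Subsingleton.elim _ _)
  rw [Subsingleton.elim y 0, Abelian.Ext.zero_comp]

theorem extVanishes_to_left (h : IsExtension A M B) (hB : ExtVanishes X B n)
    (hM : ExtVanishes X M (n + 1)) : ExtVanishes X A (n + 1) := by
  obtain ⟨T, hT, rfl, rfl, rfl⟩ := h.exists_shortExact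
  refine subsingleton_of_forall_eq 0 fun x => ?_
  obtain ⟨y, rfl⟩ := Abelian.Ext.covariant_sequence_exact₁ X hT x (Subsingleton.elim _ _) rfl
  rw [Subsingleton.elim y 0, Abelian.Ext.zero_comp]

end IsExtension

theorem exists_section_of_extVanishes (p : M →ₗ[R] B) (hp : Function.Surjective p)
    (h : ExtVanishes B (ModuleCat.of R (LinearMap.ker p)) 1) :
    ∃ s : B →ₗ[R] M, p ∘ₗ s = LinearMap.id := by
  have hT := ModuleCat.shortComplex_shortExact
    (ModuleCat.shortComplexOfCompEqZero (LinearMap.ker p).subtype p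
      p.exact_subtype_ker_map.linearMap_comp_eq_zero)
    p.exact_subtype_ker_map (Submodule.injective_subtype _) hp
  obtain ⟨y, hy⟩ := Abelian.Ext.covariant_sequence_exact₃ B hT (Abelian.Ext.mk₀ (𝟙 B)) rfl
    (h.elim _ _)
  obtain ⟨s, rfl⟩ := Abelian.Ext.homEquiv₀.symm.surjective y
  refine ⟨s.hom, congrArg ModuleCat.Hom.hom
    (Abelian.Ext.homEquiv₀.symm.injective (?_ : Abelian.Ext.mk₀ (s ≫ ModuleCat.ofHom p) = _))⟩
  rw [← Abelian.Ext.mk₀_comp_mk₀]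
  exact hy

theorem extVanishes_of_subsingleton_left (hX : Subsingleton X) : ExtVanishes X Y n := by
  cases n with
  | zero =>
    exact extVanishes_zero_iff.mpr fun f => LinearMap.ext fun x => by
      rw [Subsingleton.elim x 0, map_zero, map_zero]
  | succ n => exact extVanishes_of_projective Module.Projective.of_free

theorem extVanishes_of_subsingleton_right (hY : Subsingleton Y) : ExtVanishes X Y n := by
  cases n with
  | zero => exact extVanishes_zero_iff.mpr fun f => Subsingleton.elim _ _
  | succ n =>
    exact extVanishes_of_injective ⟨fun _ _ _ _ _ _ _ _ _ => ⟨0, fun _ => Subsingleton.elim _ _⟩⟩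

theorem ExtVanishes.congr_right {Y' : ModuleCat.{u} R} (h : ExtVanishes X Y n) (e : Y ≃ₗ[R] Y') :
    ExtVanishes X Y' n :=
  have hzero : Subsingleton (ModuleCat.of R PUnit.{u + 1}) := inferInstanceAs (Subsingleton PUnit)
  (IsExtension.refl_of_subsingleton.congr (.refl R _) e (.refl R Y)).extVanishes_to_middle
    (extVanishes_of_subsingleton_right hzero) h

namespace IsExtension

theorem hasProjectiveDimensionLT_middle (h : IsExtension A M B)
    (hA : HasProjectiveDimensionLT A n) (hB : HasProjectiveDimensionLT B n) :
    HasProjectiveDimensionLT M n := by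
  obtain ⟨T, hT, rfl, rfl, rfl⟩ := h.exists_shortExact
  exact hT.hasProjectiveDimensionLT_X₂ n hA hB

theorem hasProjectiveDimensionLT_right (h : IsExtension A M B)
    (hA : HasProjectiveDimensionLT A n) (hM : HasProjectiveDimensionLT M (n + 1)) :
    HasProjectiveDimensionLT B (n + 1) := by
  obtain ⟨T, hT, rfl, rfl, rfl⟩ := h.exists_shortExact
  exact hT.hasProjectiveDimensionLT_X₃ n hA hM

end IsExtension

end ExtVanishing

/-! ### Modules filtered by a class of sections -/

section Filtrations

variable {R : Type u} [Ring R] {C : Set (ModuleCat.{u} R)} {A B M Y : ModuleCat.{u} R}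

/-- `M` has a finite filtration all of whose sections lie in the class `C`, built up by successive
extensions; `F(Δ)` and `F(∇)` are the cases `C = Set.range Δ` and `C = Set.range ∇`. -/
inductive FilteredBy (C : Set (ModuleCat.{u} R)) : ModuleCat.{u} R → Prop
  | of_subsingleton {M : ModuleCat.{u} R} : Subsingleton M → FilteredBy C M
  | extension {A M B : ModuleCat.{u} R} :
      FilteredBy C A → IsExtension A M B → B ∈ C → FilteredBy C M

namespace FilteredBy

theorem congr (h : FilteredBy C M) {M' : ModuleCat.{u} R} (e : M ≃ₗ[R] M') :
    FilteredBy C M' := by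
  cases h with
  | of_subsingleton h => exact .of_subsingleton e.symm.toEquiv.subsingleton
  | extension hA hM hB => exact .extension hA (hM.congr (.refl R _) e (.refl R _)) hB

theorem mono {C' : Set (ModuleCat.{u} R)} (hC : C ⊆ C') (h : FilteredBy C M) :
    FilteredBy C' M := by
  induction h with
  | of_subsingleton h => exact .of_subsingleton h
  | extension _ hM hB ih => exact .extension ih hM (hC hB)

theorem of_mem (hM : M ∈ C) : FilteredBy C M :=
  have hzero : Subsingleton (ModuleCat.of R PUnit.{u + 1}) := inferInstanceAs (Subsingleton PUnit)
  .extension (.of_subsingleton hzero) IsExtension.refl_of_subsingleton hM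

theorem extVanishes {n : ℕ} (hC : ∀ X ∈ C, ExtVanishes X Y n) (h : FilteredBy C M) :
    ExtVanishes M Y n := by
  induction h with
  | of_subsingleton h => exact extVanishes_of_subsingleton_left h
  | extension _ hM hB ih => exact hM.extVanishes_middle ih (hC _ hB)

theorem extVanishes_to {n : ℕ} (hC : ∀ X ∈ C, ExtVanishes Y X n) (h : FilteredBy C M) :
    ExtVanishes Y M n := by
  induction h with
  | of_subsingleton h => exact extVanishes_of_subsingleton_right h
  | extension _ hM hB ih => exact hM.extVanishes_to_middle ih (hC _ hB)

theorem hasProjectiveDimensionLT {n : ℕ} (hC : ∀ X ∈ C, HasProjectiveDimensionLT X n)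
    (h : FilteredBy C M) : HasProjectiveDimensionLT M n := by
  induction h with
  | @of_subsingleton M h =>
    have := (ModuleCat.isZero_of_subsingleton M).hasProjectiveDimensionLT_zero
    exact hasProjectiveDimensionLT_of_ge M 0 n n.zero_le
  | extension _ hM hB ih => exact hM.hasProjectiveDimensionLT_middle ih (hC _ hB)

end FilteredBy

theorem IsExtension.exists_pullback {A' B' : ModuleCat.{u} R} (hM : IsExtension A M B)
    (hB : IsExtension A' B B') :
    ∃ K : ModuleCat.{u} R, IsExtension A K A' ∧ IsExtension K M B' := by
  obtain ⟨i, p, hi, hp, hip⟩ := hM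
  obtain ⟨j, q, hj, hq, hjq⟩ := hB
  let K := LinearMap.ker (q ∘ₗ p)
  have hiK (a : A) : i a ∈ K := by simp [K, hip.apply_apply_eq_zero]
  have hpK (x : K) : p x ∈ LinearMap.range j := hjq.linearMap_ker_eq ▸ x.2
  let pK : K →ₗ[R] LinearMap.range j := (p ∘ₗ K.subtype).codRestrict _ hpK
  have hpK_surj : Function.Surjective pK := by
    rintro ⟨y, hy⟩
    obtain ⟨x, rfl⟩ := hp y
    exact ⟨⟨x, (hjq _).mpr hy⟩, rfl⟩
  have hexact : Function.Exact (i.codRestrict K hiK) pK := fun x => by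
    rw [Subtype.ext_iff]
    exact (hip x).trans (by simp [Subtype.ext_iff])
  refine ⟨ModuleCat.of R K, ⟨i.codRestrict K hiK,
    (LinearEquiv.ofInjective j hj).symm.toLinearMap ∘ₗ pK, ?_, ?_, ?_⟩,
    IsExtension.of_ker (q ∘ₗ p) (hq.comp hp)⟩
  · exact fun a b hab => hi (congrArg Subtype.val hab)
  · exact (LinearEquiv.ofInjective j hj).symm.surjective.comp hpK_surj
  · exact LinearEquiv.postcomp_exact_iff_exact.mpr hexact

theorem FilteredBy.of_extension (hA : FilteredBy C A) (hM : IsExtension A M B)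
    (hB : FilteredBy C B) : FilteredBy C M := by
  induction hB generalizing M with
  | of_subsingleton h =>
    obtain ⟨i, p, hi, -, hip⟩ := hM
    have hi_surj : Function.Surjective i := fun x => (hip x).mp (Subsingleton.elim _ _)
    exact hA.congr (LinearEquiv.ofBijective i ⟨hi, hi_surj⟩)
  | extension _ hB hC ih =>
    obtain ⟨K, hK, hKM⟩ := hM.exists_pullback hB
    exact .extension (ih hK) hKM hC

end Filtrations

section Chains

variable {S : Type} [Ring S] {C : Set (ModuleCat.{0} S)} {A B M : ModuleCat.{0} S} {n : ℕ}
  {f : Fin (n + 1) → Submodule S M} {D : Fin n → ModuleCat.{0} S}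

namespace HasFiltrationWithSections

theorem isExtension (h : HasFiltrationWithSections S M n f D) (i : Fin n) :
    IsExtension (ModuleCat.of S (f i.castSucc)) (ModuleCat.of S (f i.succ)) (D i) := by
  obtain ⟨hmono, -, -, hsec⟩ := h
  obtain ⟨e⟩ := hsec i
  exact (IsExtension.of_le (hmono Fin.castSucc_lt_succ.le)).congr (.refl S _) (.refl S _) e

theorem filteredBy (h : HasFiltrationWithSections S M n f D) (i : Fin (n + 1))
    (hD : ∀ j : Fin n, j.castSucc < i → D j ∈ C) : FilteredBy C (ModuleCat.of S (f i)) := by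
  induction i using Fin.induction with
  | zero =>
    refine .of_subsingleton ?_
    rw [h.2.1]
    exact inferInstanceAs (Subsingleton (⊥ : Submodule S M))
  | succ i ih =>
    exact .extension (ih fun j hj => hD j (hj.trans Fin.castSucc_lt_succ)) (h.isExtension i)
      (hD i Fin.castSucc_lt_succ)

theorem nonempty_top_equiv (h : HasFiltrationWithSections S M n f D) :
    Nonempty (f (Fin.last n) ≃ₗ[S] M) :=
  ⟨(LinearEquiv.ofEq _ _ h.2.2.1).trans Submodule.topEquiv⟩

end HasFiltrationWithSections

theorem nonempty_subquot_equiv {N N' : Submodule S M} (p : N' →ₗ[S] B)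
    (hp : Function.Surjective p) (hker : LinearMap.ker p = N.comap N'.subtype) :
    Nonempty (subquot S N N' ≃ₗ[S] B) :=
  ⟨(Submodule.quotEquivOfEq _ _ hker.symm).trans (p.quotKerEquivOfSurjective hp)⟩

theorem HasFiltrationWithSections.exists_snoc {f : Fin (n + 1) → Submodule S A}
    (h : HasFiltrationWithSections S A n f D) (hM : IsExtension A M B) :
    ∃ f' : Fin (n + 2) → Submodule S M,
      HasFiltrationWithSections S M (n + 1) f' (Fin.snoc (α := fun _ => ModuleCat S) D B) := by
  obtain ⟨hmono, hbot, htop, hsec⟩ := h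
  obtain ⟨i, p, hi, hp, hip⟩ := hM
  refine ⟨Fin.snoc (α := fun _ => Submodule S M) (fun j => (f j).map i) ⊤, ?_, ?_, by simp, ?_⟩
  · refine Fin.monotone_iff_le_succ.mpr fun j => ?_
    cases j using Fin.lastCases with
    | last => simp
    | cast j =>
      rw [Fin.succ_castSucc, Fin.snoc_castSucc, Fin.snoc_castSucc]
      exact Submodule.map_mono (hmono Fin.castSucc_lt_succ.le)
  · rw [← Fin.castSucc_zero, Fin.snoc_castSucc, hbot, Submodule.map_bot]
  · intro j
    cases j using Fin.lastCases with
    | last =>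
      rw [Fin.snoc_castSucc, Fin.succ_last, Fin.snoc_last, Fin.snoc_last, htop, Submodule.map_top,
        ← hip.linearMap_ker_eq]
      exact nonempty_subquot_equiv (p ∘ₗ Submodule.subtype _)
        (hp.comp Submodule.topEquiv.surjective) (LinearMap.ker_comp _ _)
    | cast j =>
      obtain ⟨e⟩ := hsec j
      rw [Fin.snoc_castSucc, Fin.succ_castSucc, Fin.snoc_castSucc, Fin.snoc_castSucc]
      let e' : f j.succ ≃ₗ[S] (f j.succ).map i := Submodule.equivMapOfInjective i hi _
      refine nonempty_subquot_equiv (e.toLinearMap ∘ₗ Submodule.mkQ _ ∘ₗ e'.symm.toLinearMap)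
        (e.surjective.comp ((Submodule.mkQ_surjective _).comp e'.symm.surjective)) ?_
      ext x
      obtain ⟨y, rfl⟩ := e'.surjective x
      simp [e', hi.eq_iff]

theorem filteredBy_iff_exists_filtration :
    FilteredBy C M ↔ ∃ (n : ℕ) (f : Fin (n + 1) → Submodule S M) (D : Fin n → ModuleCat.{0} S),
      HasFiltrationWithSections S M n f D ∧ ∀ i, D i ∈ C := by
  constructor
  · intro h
    induction h with
    | @of_subsingleton M _ =>
      exact ⟨0, fun _ => ⊥, Fin.elim0,
        ⟨monotone_const, rfl, Subsingleton.elim _ _, fun i => i.elim0⟩, fun i => i.elim0⟩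
    | extension _ hM hB ih =>
      obtain ⟨n, f, D, hf, hD⟩ := ih
      obtain ⟨f', hf'⟩ := hf.exists_snoc hM
      refine ⟨n + 1, f', _, hf', Fin.lastCases ?_ fun i => ?_⟩
      · rwa [Fin.snoc_last]
      · rw [Fin.snoc_castSucc]
        exact hD i
  · rintro ⟨n, f, D, hf, hD⟩
    obtain ⟨e⟩ := hf.nonempty_top_equiv
    exact (hf.filteredBy (Fin.last n) fun i _ => hD i).congr e

theorem inCostdFilt_iff_filteredBy {Λ : Type} [Fintype Λ] [PartialOrder Λ] {Q : QHData S Λ} :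
    InCostdFilt S Q M ↔ FilteredBy (Set.range Q.costd) M := by
  rw [filteredBy_iff_exists_filtration]
  constructor
  · rintro ⟨n, f, g, h⟩
    exact ⟨n, f, _, h, fun i => ⟨g i, rfl⟩⟩
  · rintro ⟨n, f, D, h, hD⟩
    choose g hg using hD
    obtain rfl : (fun i => Q.costd (g i)) = D := funext hg
    exact ⟨n, f, g, h⟩

end Chains

/-! ### Composition factors and projective covers -/

section ProjectiveCovers

variable {S : Type} [Ring S] {P L A B M N : ModuleCat.{0} S}

theorem IsCompFactor.nonempty_equiv [IsSimpleModule S L] [IsSimpleModule S M]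
    (h : IsCompFactor S L M) : Nonempty (M ≃ₗ[S] L) := by
  obtain ⟨N, N', hle, ⟨e⟩⟩ := h
  have := IsSimpleModule.nontrivial S L
  have hN' : N' = ⊤ := (eq_bot_or_eq_top N').resolve_left fun hbot => by
    subst hbot
    exact not_subsingleton L e.symm.toEquiv.subsingleton
  subst hN'
  let p : M →ₗ[S] L := e.toLinearMap ∘ₗ Submodule.mkQ _ ∘ₗ Submodule.topEquiv.symm.toLinearMap
  have hp : Function.Surjective p :=
    e.surjective.comp ((Submodule.mkQ_surjective _).comp Submodule.topEquiv.symm.surjective)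
  have hp0 : p ≠ 0 := fun h0 => by
    obtain ⟨x, hx⟩ := exists_ne (0 : L)
    obtain ⟨y, rfl⟩ := hp x
    exact hx (LinearMap.congr_fun h0 y)
  exact ⟨LinearEquiv.ofBijective p (LinearMap.bijective_of_ne_zero hp0)⟩

namespace IsProjCover

variable [IsSimpleModule S L]

theorem exists_surjective_forall_le_ker (hP : IsProjCover S P L) :
    ∃ π : P →ₗ[S] L, Function.Surjective π ∧
      ∀ N : Submodule S P, N ≠ ⊤ → N ≤ LinearMap.ker π := by
  obtain ⟨-, π, hπ, hsup⟩ := hP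
  refine ⟨π, hπ, fun N hN => ?_⟩
  by_contra hle
  exact hN (hsup N ((LinearMap.isCoatom_ker_of_surjective hπ).2 _
    (right_lt_sup.mpr hle)))

theorem finite (hP : IsProjCover S P L) : Module.Finite S P := by
  obtain ⟨π, hπ, hmax⟩ := hP.exists_surjective_forall_le_ker
  have := IsSimpleModule.nontrivial S L
  obtain ⟨x, hx⟩ := exists_ne (0 : L)
  obtain ⟨y, rfl⟩ := hπ x
  have hy : Submodule.span S {y} = ⊤ := by
    by_contra hne
    exact hx (hmax _ hne (Submodule.mem_span_singleton_self y))
  exact ⟨hy ▸ Submodule.fg_span_singleton y⟩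

theorem surjective_of_comp (hP : IsProjCover S P L) [Nontrivial B] {h : P →ₗ[S] B} {g : A →ₗ[S] P}
    (hg : Function.Surjective (h ∘ₗ g)) : Function.Surjective g := by
  obtain ⟨π, hπ, hmax⟩ := hP.exists_surjective_forall_le_ker
  have hsup : LinearMap.range g ⊔ LinearMap.ker h = ⊤ := by
    rw [← Submodule.comap_map_eq, ← LinearMap.range_comp, LinearMap.range_eq_top.mpr hg,
      Submodule.comap_top]
  have hh : LinearMap.ker h ≠ ⊤ := fun hker => by
    obtain ⟨b, hb⟩ := exists_ne (0 : B)
    obtain ⟨a, rfl⟩ := hg b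
    exact hb (hker ▸ Submodule.mem_top : g a ∈ LinearMap.ker h)
  refine LinearMap.range_eq_top.mp (by_contra fun hg' => ?_)
  exact (LinearMap.isCoatom_ker_of_surjective hπ).1
    (top_le_iff.mp (hsup ▸ sup_le (hmax _ hg') (hmax _ hh)))

theorem isCompFactor_iff (hP : IsProjCover S P L) :
    IsCompFactor S L M ↔ ∃ h : P →ₗ[S] M, h ≠ 0 := by
  have := hP.1
  obtain ⟨π, hπ, hmax⟩ := hP.exists_surjective_forall_le_ker
  constructor
  · rintro ⟨N, N', -, ⟨e⟩⟩
    obtain ⟨h, hh⟩ := Module.projective_lifting_property (e.toLinearMap ∘ₗ Submodule.mkQ _) π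
      (e.surjective.comp (Submodule.mkQ_surjective _))
    refine ⟨N'.subtype ∘ₗ h, fun h0 => ?_⟩
    have hh0 : h = 0 := LinearMap.ext fun x => Subtype.ext (LinearMap.congr_fun h0 x)
    have := IsSimpleModule.nontrivial S L
    rw [hh0, LinearMap.comp_zero] at hh
    exact (LinearMap.isCoatom_ker_of_surjective hπ).1 (by rw [← hh, LinearMap.ker_zero])
  · rintro ⟨h, hh⟩
    have hker : LinearMap.ker h ≤ LinearMap.ker π := hmax _ (LinearMap.ker_eq_top.not.mpr hh)
    let p : LinearMap.range h →ₗ[S] L :=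
      (LinearMap.ker h).liftQ π hker ∘ₗ h.quotKerEquivRange.symm.toLinearMap
    have hlift : Function.Surjective ((LinearMap.ker h).liftQ π hker) := by
      rw [← LinearMap.range_eq_top, Submodule.range_liftQ, LinearMap.range_eq_top.mpr hπ]
    have hp : Function.Surjective p := hlift.comp h.quotKerEquivRange.symm.surjective
    refine ⟨(LinearMap.ker p).map (LinearMap.range h).subtype, LinearMap.range h,
      Submodule.map_subtype_le _ _, nonempty_subquot_equiv p hp ?_⟩
    exact (Submodule.comap_map_eq_of_injective (Submodule.injective_subtype _) _).symm

theorem isCompFactor_of_injective (hP : IsProjCover S P L) {i : M →ₗ[S] N}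
    (hi : Function.Injective i) (h : IsCompFactor S L M) : IsCompFactor S L N := by
  obtain ⟨f, hf⟩ := hP.isCompFactor_iff.mp h
  exact hP.isCompFactor_iff.mpr ⟨i ∘ₗ f, fun h0 => hf (LinearMap.cancel_left hi |>.mp
    (h0.trans (LinearMap.comp_zero i).symm))⟩

theorem isCompFactor_of_surjective (hP : IsProjCover S P L) {p : M →ₗ[S] N}
    (hp : Function.Surjective p) (h : IsCompFactor S L N) : IsCompFactor S L M := by
  obtain ⟨f, hf⟩ := hP.isCompFactor_iff.mp h
  have := hP.1
  obtain ⟨g, rfl⟩ := Module.projective_lifting_property p f hp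
  exact hP.isCompFactor_iff.mpr ⟨g, fun h0 => hf (h0 ▸ LinearMap.comp_zero p)⟩

theorem isCompFactor_or_of_isExtension (hP : IsProjCover S P L) (hM : IsExtension A M B)
    (h : IsCompFactor S L M) : IsCompFactor S L A ∨ IsCompFactor S L B := by
  obtain ⟨i, p, hi, -, hip⟩ := hM
  obtain ⟨f, hf⟩ := hP.isCompFactor_iff.mp h
  by_cases hpf : p ∘ₗ f = 0
  · have hrange (x : P) : f x ∈ LinearMap.range i := (hip _).mp (LinearMap.congr_fun hpf x)
    refine .inl (hP.isCompFactor_iff.mpr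
      ⟨(LinearEquiv.ofInjective i hi).symm.toLinearMap ∘ₗ f.codRestrict _ hrange, fun h0 => hf ?_⟩)
    ext x
    simpa [Subtype.ext_iff] using LinearMap.congr_fun h0 x
  · exact .inr (hP.isCompFactor_iff.mpr ⟨p ∘ₗ f, hpf⟩)

theorem exists_section_equiv (hP : IsProjCover S P L) {h : P →ₗ[S] M} (hh : h ≠ 0) {n : ℕ}
    {f : Fin (n + 1) → Submodule S M} (hbot : f 0 = ⊥) (htop : f (Fin.last n) = ⊤)
    (hsimple : ∀ i : Fin n, IsSimpleModule S (subquot S (f i.castSucc) (f i.succ))) :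
    ∃ i : Fin n, LinearMap.range h ≤ f i.succ ∧ ¬ LinearMap.range h ≤ f i.castSucc ∧
      Nonempty (subquot S (f i.castSucc) (f i.succ) ≃ₗ[S] L) := by
  have hex : ∃ i : Fin n, LinearMap.range h ≤ f i.succ ∧ ¬ LinearMap.range h ≤ f i.castSucc := by
    by_contra! hall
    have hle (i : Fin (n + 1)) : ¬ LinearMap.range h ≤ f i := by
      induction i using Fin.induction with
      | zero => rwa [hbot, le_bot_iff, LinearMap.range_eq_bot]
      | succ i ih => exact fun hi => ih (hall i hi)
    exact hle (Fin.last n) (htop ▸ le_top)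
  obtain ⟨i, hi, hi'⟩ := hex
  refine ⟨i, hi, hi', ?_⟩
  let q : P →ₗ[S] subquot S (f i.castSucc) (f i.succ) :=
    Submodule.mkQ _ ∘ₗ h.codRestrict _ fun x => hi (LinearMap.mem_range_self h x)
  have hq : q ≠ 0 := fun h0 => hi' (by
    rintro _ ⟨x, rfl⟩
    have hx : q x = 0 := LinearMap.congr_fun h0 x
    exact (Submodule.Quotient.mk_eq_zero ((f i.castSucc).comap (f i.succ).subtype)).mp hx)
  have hsimple_i := hsimple i
  have : IsSimpleModule S (ModuleCat.of S (subquot S (f i.castSucc) (f i.succ))) := hsimple_i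
  exact (hP.isCompFactor_iff (M := ModuleCat.of S (subquot S _ _))).mpr ⟨q, hq⟩ |>.nonempty_equiv

theorem exists_isExtension_not_isCompFactor (hP : IsProjCover S P L) {q : P →ₗ[S] M}
    (hq : Function.Surjective q) (hmult : CompFactorMult S L M 1) :
    ∃ K : ModuleCat.{0} S, IsExtension K M L ∧ ¬ IsCompFactor S L K := by
  obtain ⟨n, f, hmono, hbot, htop, hsimple, hcard⟩ := hmult
  obtain ⟨hunique, ⟨i, ⟨e⟩⟩⟩ := Nat.card_eq_one_iff_unique.mp hcard
  have hle (j : Fin n) : f j.castSucc ≤ f j.succ := hmono Fin.castSucc_lt_succ.le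
  have hi_eq {j : Fin n} (hj : Nonempty (subquot S (f j.castSucc) (f j.succ) ≃ₗ[S] L)) : j = i :=
    congrArg Subtype.val (hunique.elim ⟨j, hj⟩ ⟨i, ⟨e⟩⟩)
  have hq0 : q ≠ 0 := by
    rintro rfl
    obtain ⟨h, hh⟩ := hP.isCompFactor_iff.mp ⟨_, _, hle i, ⟨e⟩⟩
    refine hh (LinearMap.ext fun x => ?_)
    obtain ⟨y, hy⟩ := hq (h x)
    exact hy.symm
  have htop_i : f i.succ = ⊤ := by
    obtain ⟨j, hj, -, he⟩ := hP.exists_section_equiv hq0 hbot htop hsimple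
    rwa [hi_eq he, LinearMap.range_eq_top.mpr hq, top_le_iff] at hj
  refine ⟨ModuleCat.of S (f i.castSucc), (IsExtension.of_le (hle i)).congr (.refl S _)
    ((LinearEquiv.ofEq _ _ htop_i).trans Submodule.topEquiv) e, fun hK => ?_⟩
  obtain ⟨h, hh⟩ := hP.isCompFactor_iff.mp hK
  have hh' : (f i.castSucc).subtype ∘ₗ h ≠ 0 := fun h0 =>
    hh (LinearMap.ext fun x => Subtype.ext (LinearMap.congr_fun h0 x))
  obtain ⟨j, -, hj, he⟩ := hP.exists_section_equiv hh' hbot htop hsimple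
  obtain rfl := hi_eq he
  refine hj ?_
  rintro _ ⟨x, rfl⟩
  exact (h x).2

end IsProjCover

end ProjectiveCovers

/-! ### Standard and costandard modules -/

section Standard

variable {S : Type} [Ring S] {Λ : Type} [Fintype Λ] [PartialOrder Λ] (Q : QHData S Λ)
  {A B M N X : ModuleCat.{0} S} {lam mu : Λ}

attribute [local instance] QHData.simpleL

namespace QHData

/-- All composition factors `L(μ)` of `M` satisfy `μ ≤ λ`: the condition cutting out `Δ(λ)` from
`P(λ)` and `∇(λ)` from `I(λ)`. -/
def FactorsLE (lam : Λ) (M : ModuleCat.{0} S) : Prop :=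
  ∀ mu, IsCompFactor S (Q.L mu) M → mu ≤ lam

variable {Q}

theorem FactorsLE.of_injective (h : Q.FactorsLE lam N) {i : M →ₗ[S] N}
    (hi : Function.Injective i) : Q.FactorsLE lam M :=
  fun mu hmu => h mu ((Q.projCover mu).isCompFactor_of_injective hi hmu)

theorem FactorsLE.of_surjective (h : Q.FactorsLE lam M) {p : M →ₗ[S] N}
    (hp : Function.Surjective p) : Q.FactorsLE lam N :=
  fun mu hmu => h mu ((Q.projCover mu).isCompFactor_of_surjective hp hmu)

theorem FactorsLE.of_isExtension (hM : IsExtension A M B) (hA : Q.FactorsLE lam A)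
    (hB : Q.FactorsLE lam B) : Q.FactorsLE lam M :=
  fun mu hmu => ((Q.projCover mu).isCompFactor_or_of_isExtension hM hmu).elim (hA mu) (hB mu)

variable (Q)

theorem eq_of_isCompFactor_L (h : IsCompFactor S (Q.L lam) (Q.L mu)) : lam = mu := by
  obtain ⟨e⟩ := h.nonempty_equiv
  by_contra hne
  exact (Q.nonisoL lam mu hne).false e.symm

theorem isCompFactor_L_of_surjective {p : Q.P lam →ₗ[S] M} (hp : Function.Surjective p)
    [Nontrivial M] : IsCompFactor S (Q.L lam) M := by
  refine (Q.projCover lam).isCompFactor_iff.mpr ⟨p, ?_⟩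
  rintro rfl
  obtain ⟨x, hx⟩ := exists_ne (0 : M)
  obtain ⟨y, hy⟩ := hp x
  exact hx hy.symm

theorem exists_surjective_std : ∃ q : Q.P lam →ₗ[S] Q.std lam, Function.Surjective q := by
  obtain ⟨K, ⟨e⟩, -, -⟩ := Q.stdSpec lam
  exact ⟨e.symm.toLinearMap ∘ₗ K.mkQ, e.symm.surjective.comp K.mkQ_surjective⟩

theorem finite_std (lam : Λ) : Module.Finite S (Q.std lam) := by
  obtain ⟨q, hq⟩ := Q.exists_surjective_std (lam := lam)
  have := (Q.projCover lam).finite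
  exact .of_surjective q hq

theorem factorsLE_std (lam : Λ) : Q.FactorsLE lam (Q.std lam) := by
  obtain ⟨K, ⟨e⟩, hK, -⟩ := Q.stdSpec lam
  exact FactorsLE.of_surjective hK (N := Q.std lam) e.symm.surjective

variable {Q} in
theorem FactorsLE.exists_surjective_from_std (h : Q.FactorsLE lam M) {p : Q.P lam →ₗ[S] M}
    (hp : Function.Surjective p) : ∃ q : Q.std lam →ₗ[S] M, Function.Surjective q := by
  obtain ⟨K, ⟨e⟩, -, hmin⟩ := Q.stdSpec lam
  have hK : K ≤ LinearMap.ker p := hmin _ (h.of_injective (p.quotKerEquivOfSurjective hp).injective)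
  have hlift : Function.Surjective (K.liftQ p hK) := by
    rw [← LinearMap.range_eq_top, Submodule.range_liftQ, LinearMap.range_eq_top.mpr hp]
  exact ⟨K.liftQ p hK ∘ₗ e.toLinearMap, hlift.comp e.surjective⟩

theorem exists_isExtension_std_L (lam : Λ) :
    ∃ K : ModuleCat.{0} S, IsExtension K (Q.std lam) (Q.L lam) ∧
      ∀ mu, IsCompFactor S (Q.L mu) K → mu < lam := by
  obtain ⟨q, hq⟩ := Q.exists_surjective_std (lam := lam)
  obtain ⟨K, hK, hnot⟩ := (Q.projCover lam).exists_isExtension_not_isCompFactor hq (Q.multOne lam)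
  obtain ⟨i, -, hi, -⟩ := id hK
  refine ⟨K, hK, fun mu hmu => ((Q.factorsLE_std lam).of_injective hi mu hmu).lt_of_ne ?_⟩
  rintro rfl
  exact hnot hmu

theorem exists_isExtension_P_std (lam : Λ) :
    ∃ K : ModuleCat.{0} S, IsExtension K (Q.P lam) (Q.std lam) ∧
      FilteredBy (Q.std '' Set.Ioi lam) K := by
  obtain ⟨n, f, g, hf, hle, hcard⟩ := Q.projFilt lam
  obtain ⟨hunique, ⟨i₀, hi₀⟩⟩ := Nat.card_eq_one_iff_unique.mp hcard
  obtain ⟨n, rfl⟩ : ∃ m, n = m + 1 := Nat.exists_eq_succ_of_ne_zero i₀.pos.ne'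
  obtain ⟨e⟩ := hf.nonempty_top_equiv
  have htop : IsExtension (ModuleCat.of S (f (Fin.last n).castSucc)) (Q.P lam)
      (Q.std (g (Fin.last n))) := (hf.isExtension (Fin.last n)).congr (.refl S _) e (.refl S _)
  have hlast : g (Fin.last n) = lam := by
    obtain ⟨-, p, -, hp, -⟩ := htop
    obtain ⟨-, ⟨-, q, -, hq, -⟩, -⟩ := Q.exists_isExtension_std_L (g (Fin.last n))
    have := IsSimpleModule.nontrivial S (Q.L (g (Fin.last n)))
    exact (Q.eq_of_isCompFactor_L
      (Q.isCompFactor_L_of_surjective (p := q ∘ₗ p) (hq.comp hp))).symm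
  refine ⟨_, hlast ▸ htop, hf.filteredBy _ fun j hj => ⟨g j, (hle j).lt_of_ne' ?_, rfl⟩⟩
  intro hgj
  have hj_last : j = Fin.last n := congrArg Subtype.val (hunique.elim ⟨j, hgj⟩ ⟨_, hlast⟩)
  exact hj.ne (congrArg Fin.castSucc hj_last)

theorem factorsLE_costd (lam : Λ) : Q.FactorsLE lam (Q.costd lam) := by
  obtain ⟨V, ⟨e⟩, hV, -⟩ := Q.costdSpec lam
  exact FactorsLE.of_injective hV (M := Q.costd lam) e.injective

theorem exists_injective_costd : ∃ i : Q.costd lam →ₗ[S] Q.I lam, Function.Injective i := by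
  obtain ⟨V, ⟨e⟩, -, -⟩ := Q.costdSpec lam
  exact ⟨V.subtype ∘ₗ e.toLinearMap, V.injective_subtype.comp e.injective⟩

variable {Q} in
theorem FactorsLE.exists_injective_to_costd (h : Q.FactorsLE lam M) {i : M →ₗ[S] Q.I lam}
    (hi : Function.Injective i) : ∃ j : M →ₗ[S] Q.costd lam, Function.Injective j := by
  obtain ⟨V, ⟨e⟩, -, hmax⟩ := Q.costdSpec lam
  have hV : LinearMap.range i ≤ V :=
    hmax _ (h.of_injective (LinearEquiv.ofInjective i hi).symm.injective)
  let j : M →ₗ[S] V := i.codRestrict V fun x => hV (LinearMap.mem_range_self i x)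
  have hj : Function.Injective j := fun x y hxy => hi (congrArg Subtype.val hxy)
  exact ⟨e.symm.toLinearMap ∘ₗ j, e.symm.injective.comp hj⟩

variable {Q} in
theorem FactorsLE.extVanishes_one_costd (h : Q.FactorsLE lam X) :
    ExtVanishes X (Q.costd lam) 1 := by
  obtain ⟨V, ⟨e⟩, hV, hmax⟩ := Q.costdSpec lam
  refine ExtVanishes.congr_right (Y := ModuleCat.of S V) ?_ e.symm
  refine (IsExtension.of_submodule V).extVanishes_to_left
    (extVanishes_zero_iff.mpr fun f => ?_) (extVanishes_of_injective (Q.injHull lam).1)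
  let W : Submodule S (Q.I lam) := (LinearMap.range f).comap V.mkQ
  have hVW : V ≤ W := fun x hx => by
    rw [Submodule.mem_comap, Submodule.mkQ_apply, (Submodule.Quotient.mk_eq_zero V).mpr hx]
    exact zero_mem _
  let p : W →ₗ[S] LinearMap.range f := (V.mkQ ∘ₗ W.subtype).codRestrict _ fun x => x.2
  have hp : Function.Surjective p := by
    rintro ⟨y, hy⟩
    obtain ⟨x, rfl⟩ := V.mkQ_surjective y
    exact ⟨⟨x, hy⟩, rfl⟩
  have hker : LinearMap.ker p = V.comap W.subtype := by
    refine (LinearMap.ker_codRestrict _ _ _).trans ?_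
    rw [LinearMap.ker_comp, Submodule.ker_mkQ]
  obtain ⟨eW⟩ := nonempty_subquot_equiv (B := ModuleCat.of S (LinearMap.range f)) p hp hker
  have hW : Q.FactorsLE lam (ModuleCat.of S W) :=
    .of_isExtension ((IsExtension.of_le hVW).congr (.refl S _) (.refl S _) eW) hV
      (h.of_surjective f.surjective_rangeRestrict)
  rw [← LinearMap.range_eq_bot, eq_bot_iff]
  intro y hy
  obtain ⟨x, rfl⟩ := V.mkQ_surjective y
  exact (Submodule.Quotient.mk_eq_zero V).mpr (hmax W hW hy)

theorem extVanishes_zero_std_costd (h : ¬ lam ≤ mu) :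
    ExtVanishes (Q.std lam) (Q.costd mu) 0 := by
  refine extVanishes_zero_iff.mpr fun f => by_contra fun hf => h ?_
  obtain ⟨q, hq⟩ := Q.exists_surjective_std (lam := lam)
  exact Q.factorsLE_costd mu lam ((Q.projCover lam).isCompFactor_iff.mpr ⟨f ∘ₗ q, fun h0 =>
    hf ((LinearMap.cancel_right hq).mp (h0.trans (LinearMap.zero_comp q).symm))⟩)

theorem extVanishes_std_costd (lam mu : Λ) (n : ℕ) :
    ExtVanishes (Q.std lam) (Q.costd mu) (n + 1) := by
  induction n generalizing lam with
  | zero =>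
    by_cases hle : lam ≤ mu
    · exact FactorsLE.extVanishes_one_costd fun nu hnu => (Q.factorsLE_std lam nu hnu).trans hle
    · obtain ⟨K, hK, hfilt⟩ := Q.exists_isExtension_P_std lam
      refine hK.extVanishes_right (hfilt.extVanishes ?_)
        (extVanishes_of_projective (Q.projCover lam).1)
      rintro _ ⟨nu, hnu, rfl⟩
      exact Q.extVanishes_zero_std_costd fun hnu_le => hle (hnu.le.trans hnu_le)
  | succ n ih =>
    obtain ⟨K, hK, hfilt⟩ := Q.exists_isExtension_P_std lam
    refine hK.extVanishes_right (hfilt.extVanishes ?_)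
      (extVanishes_of_projective (Q.projCover lam).1)
    rintro _ ⟨nu, -, rfl⟩
    exact ih nu

end QHData

end Standard

/-! ### Finiteness of the global dimension -/

section GlobalDimension

theorem exists_forall_hasProjectiveDimensionLT {R : Type u} [Ring R] {ι : Type*} [Finite ι]
    (X : ι → ModuleCat.{u} R) (h : ∀ i, ∃ n, HasProjectiveDimensionLT (X i) n) :
    ∃ n, ∀ i, HasProjectiveDimensionLT (X i) n := by
  choose n hn using h
  obtain ⟨b, hb⟩ := Set.finite_range n |>.bddAbove
  exact ⟨b, fun i => hasProjectiveDimensionLT_of_ge (X i) (n i) b (hb ⟨i, rfl⟩)⟩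

variable {S : Type} [Ring S] {Λ : Type} [Fintype Λ] [PartialOrder Λ] (Q : QHData S Λ)
  {M : ModuleCat.{0} S}

attribute [local instance] QHData.simpleL

namespace QHData

theorem exists_hasProjectiveDimensionLT_std (lam : Λ) :
    ∃ n, HasProjectiveDimensionLT (Q.std lam) n := by
  induction lam using WellFoundedGT.induction with
  | ind lam ih =>
    obtain ⟨K, hK, hfilt⟩ := Q.exists_isExtension_P_std lam
    obtain ⟨n, hn⟩ := exists_forall_hasProjectiveDimensionLT
      (fun nu : Set.Ioi lam => Q.std nu) fun nu => ih nu nu.2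
    have := (IsProjective.iff_projective (Q.P lam)).mp (Q.projCover lam).1
    refine ⟨n + 1, hK.hasProjectiveDimensionLT_right (hfilt.hasProjectiveDimensionLT ?_)
      (hasProjectiveDimensionLT_of_ge (Q.P lam) 1 (n + 1) le_add_self)⟩
    rintro _ ⟨nu, hnu, rfl⟩
    exact hn ⟨nu, hnu⟩

theorem isCompFactor_L_self (lam : Λ) : IsCompFactor S (Q.L lam) (Q.L lam) := by
  obtain ⟨-, π, hπ, -⟩ := Q.projCover lam
  have := IsSimpleModule.nontrivial S (Q.L lam)
  exact Q.isCompFactor_L_of_surjective hπ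

theorem filteredBy_L_of_isFiniteLength {M : Type} [AddCommGroup M] [Module S M]
    (hM : IsFiniteLength S M) :
    FilteredBy (Q.L '' {mu | IsCompFactor S (Q.L mu) (ModuleCat.of S M)}) (ModuleCat.of S M) := by
  induction hM with
  | @of_subsingleton M _ _ hM => exact .of_subsingleton hM
  | @of_simple_quotient M _ _ N hsimple _ ih =>
    obtain ⟨mu, ⟨e⟩⟩ := Q.fullL (ModuleCat.of S (M ⧸ N)) hsimple
    have hmu : IsCompFactor S (Q.L mu) (ModuleCat.of S M) :=
      (Q.projCover mu).isCompFactor_of_surjective (M := ModuleCat.of S M)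
        (p := e.toLinearMap ∘ₗ N.mkQ) (e.surjective.comp N.mkQ_surjective)
        (Q.isCompFactor_L_self mu)
    refine .extension (ih.mono (Set.image_mono fun nu hnu => ?_))
      ((IsExtension.of_submodule (M := ModuleCat.of S M) N).congr (.refl S _) (.refl S _) e)
      ⟨mu, hmu, rfl⟩
    exact (Q.projCover nu).isCompFactor_of_injective (N := ModuleCat.of S M)
      N.injective_subtype hnu

variable [IsArtinianRing S]

theorem filteredBy_L [Module.Finite S M] :
    FilteredBy (Q.L '' {mu | IsCompFactor S (Q.L mu) M}) M :=
  Q.filteredBy_L_of_isFiniteLength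
    (isFiniteLength_iff_isNoetherian_isArtinian.mpr ⟨inferInstance, inferInstance⟩)

theorem exists_hasProjectiveDimensionLT_L (lam : Λ) :
    ∃ n, HasProjectiveDimensionLT (Q.L lam) n := by
  induction lam using WellFoundedLT.induction with
  | ind lam ih =>
    obtain ⟨K, hK, hlt⟩ := Q.exists_isExtension_std_L lam
    obtain ⟨n, hn⟩ := exists_forall_hasProjectiveDimensionLT
      (fun nu : Set.Iio lam => Q.L nu) fun nu => ih nu nu.2
    obtain ⟨m, hm⟩ := Q.exists_hasProjectiveDimensionLT_std lam
    have hKn : HasProjectiveDimensionLT K n := by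
      have := hK.finite_left (Q.finite_std lam)
      refine Q.filteredBy_L.hasProjectiveDimensionLT ?_
      rintro _ ⟨nu, hnu, rfl⟩
      exact hn ⟨nu, hlt nu hnu⟩
    exact ⟨max n m + 1, hK.hasProjectiveDimensionLT_right
      (hasProjectiveDimensionLT_of_ge K n _ (le_max_left n m))
      (hasProjectiveDimensionLT_of_ge _ m _ ((le_max_right n m).trans (Nat.le_succ _)))⟩

theorem exists_forall_finite_hasProjectiveDimensionLT (Q : QHData S Λ) :
    ∃ n, ∀ M : ModuleCat.{0} S, Module.Finite S M → HasProjectiveDimensionLT M n := by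
  obtain ⟨n, hn⟩ := exists_forall_hasProjectiveDimensionLT Q.L Q.exists_hasProjectiveDimensionLT_L
  refine ⟨n, fun M hM => Q.filteredBy_L.hasProjectiveDimensionLT ?_⟩
  rintro _ ⟨mu, -, rfl⟩
  exact hn mu

end QHData

end GlobalDimension

/-! ### Standard filtrations of projective modules -/

section Projective

theorem projective_ker {R M N : Type*} [Ring R] [AddCommGroup M] [AddCommGroup N]
    [Module R M] [Module R N] [Module.Projective R M] [Module.Projective R N] (r : M →ₗ[R] N)
    (hr : Function.Surjective r) : Module.Projective R (LinearMap.ker r) := by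
  obtain ⟨s, hs⟩ := Module.projective_lifting_property r LinearMap.id hr
  have hs' (x : N) : r (s x) = x := LinearMap.congr_fun hs x
  let t : M →ₗ[R] LinearMap.ker r :=
    (LinearMap.id - s ∘ₗ r).codRestrict _ fun x => by simp [hs']
  refine .of_split (LinearMap.ker r).subtype t ?_
  ext ⟨x, hx⟩
  simp [t, LinearMap.mem_ker.mp hx]

variable {S : Type} [Ring S] {Λ : Type} [Fintype Λ] [PartialOrder Λ] (Q : QHData S Λ)
  {M : ModuleCat.{0} S}

attribute [local instance] QHData.simpleL

namespace QHData

theorem filteredBy_std_P (lam : Λ) : FilteredBy (Set.range Q.std) (Q.P lam) := by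
  obtain ⟨K, hK, hfilt⟩ := Q.exists_isExtension_P_std lam
  exact .extension (hfilt.mono (Set.image_subset_range _ _)) hK ⟨lam, rfl⟩

theorem nontrivial_P (lam : Λ) : Nontrivial (Q.P lam) := by
  obtain ⟨-, π, hπ, -⟩ := Q.projCover lam
  have := IsSimpleModule.nontrivial S (Q.L lam)
  exact hπ.nontrivial

theorem exists_surjective_P [Module.Finite S M] [Nontrivial M] (hM : Module.Projective S M) :
    ∃ (lam : Λ) (p : M →ₗ[S] Q.P lam), Function.Surjective p := by
  obtain ⟨N, hN⟩ := IsCoatomic.exists_coatom (Submodule S M)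
  have hsimple : IsSimpleModule S (M ⧸ N) := isSimpleModule_iff_isCoatom.mpr hN
  obtain ⟨lam, ⟨e⟩⟩ := Q.fullL (ModuleCat.of S (M ⧸ N)) hsimple
  obtain ⟨π, hπ, -⟩ := (Q.projCover lam).exists_surjective_forall_le_ker
  have he : Function.Surjective (e.toLinearMap ∘ₗ N.mkQ) := e.surjective.comp N.mkQ_surjective
  obtain ⟨p, hp⟩ := Module.projective_lifting_property π (e.toLinearMap ∘ₗ N.mkQ) hπ
  have := IsSimpleModule.nontrivial S (Q.L lam)
  exact ⟨lam, p, (Q.projCover lam).surjective_of_comp (hp ▸ he)⟩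

theorem filteredBy_std_of_projective [IsArtinianRing S] [Module.Finite S M]
    (hM : Module.Projective S M) : FilteredBy (Set.range Q.std) M := by
  suffices h : ∀ A : Submodule S M, Module.Projective S A →
      FilteredBy (Set.range Q.std) (ModuleCat.of S A) from
    (h ⊤ (.of_equiv Submodule.topEquiv.symm)).congr Submodule.topEquiv
  intro A
  induction A using WellFoundedLT.induction with
  | ind A ih =>
    intro hA
    rcases subsingleton_or_nontrivial A with hzero | hzero
    · exact .of_subsingleton hzero
    have hfin : Module.Finite S (ModuleCat.of S A) := inferInstanceAs (Module.Finite S A)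
    obtain ⟨lam, r, hr⟩ := Q.exists_surjective_P (M := ModuleCat.of S A) hA
    have := (Q.projCover lam).1
    have hker : LinearMap.ker r ≠ ⊤ := fun htop => by
      have := Q.nontrivial_P lam
      obtain ⟨y, hy⟩ := exists_ne (0 : Q.P lam)
      obtain ⟨x, rfl⟩ := hr y
      exact hy (htop ▸ Submodule.mem_top : x ∈ LinearMap.ker r)
    let B : Submodule S M := (LinearMap.ker r).map A.subtype
    let e : LinearMap.ker r ≃ₗ[S] B :=
      Submodule.equivMapOfInjective A.subtype A.injective_subtype _
    have hlt : B < A := (Submodule.map_strictMono_of_injective A.injective_subtype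
      hker.lt_top).trans_eq (Submodule.map_subtype_top A)
    have hB : Module.Projective S B :=
      have := projective_ker r hr
      .of_equiv e
    exact .of_extension (ih B hlt hB)
      ((IsExtension.of_ker r hr).congr e (.refl S _) (.refl S _)) (Q.filteredBy_std_P lam)

end QHData

end Projective

/-! ### Resolutions and coresolutions -/

section Resolutions

variable {R : Type u} [Ring R] {C : Set (ModuleCat.{u} R)} {M X : ModuleCat.{u} R} {d : ℕ}

/-- There is an exact sequence `0 → P_d → ⋯ → P_0 → M → 0` with all `P_i` in the class `C`. -/
def HasResolution (C : Set (ModuleCat.{u} R)) : ℕ → ModuleCat.{u} R → Prop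
  | 0, M => M ∈ C
  | d + 1, M => ∃ K P : ModuleCat.{u} R, IsExtension K P M ∧ P ∈ C ∧ HasResolution C d K

/-- There is an exact sequence `0 → M → I_0 → ⋯ → I_d → 0` with all `I_i` in the class `C`. -/
def HasCoresolution (C : Set (ModuleCat.{u} R)) : ℕ → ModuleCat.{u} R → Prop
  | 0, M => M ∈ C
  | d + 1, M => ∃ I K : ModuleCat.{u} R, IsExtension M I K ∧ I ∈ C ∧ HasCoresolution C d K

theorem HasCoresolution.congr {M' : ModuleCat.{u} R}
    (hC : ∀ {A B : ModuleCat.{u} R}, (A ≃ₗ[R] B) → A ∈ C → B ∈ C) (h : HasCoresolution C d M)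
    (e : M ≃ₗ[R] M') : HasCoresolution C d M' := by
  cases d with
  | zero => exact hC e h
  | succ d =>
    obtain ⟨I, K, hI, hIC, hK⟩ := h
    exact ⟨I, K, hI.congr e (.refl R I) (.refl R K), hIC, hK⟩

theorem HasCoresolution.extVanishes (hC : ∀ Y ∈ C, ∀ n, ExtVanishes X Y (n + 1))
    (h : HasCoresolution C d M) {n : ℕ} (hn : d < n) : ExtVanishes X M n := by
  induction d generalizing M n with
  | zero =>
    obtain ⟨n, rfl⟩ := Nat.exists_eq_add_one_of_ne_zero hn.ne'
    exact hC M h n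
  | succ d ih =>
    obtain ⟨I, K, hI, hIC, hK⟩ := h
    obtain ⟨n, rfl⟩ := Nat.exists_eq_add_one_of_ne_zero (Nat.ne_zero_of_lt hn)
    exact hI.extVanishes_to_left (ih hK (Nat.lt_of_succ_lt_succ hn)) (hC I hIC n)

/-- The finitely generated projective modules. -/
def finiteProjectives (R : Type u) [Ring R] : Set (ModuleCat.{u} R) :=
  {P | Module.Finite R P ∧ Module.Projective R P}

theorem hasResolution_finiteProjectives [IsNoetherianRing R] (hX : Module.Finite R X)
    (h : ∀ Y : ModuleCat.{u} R, Module.Finite R Y → ExtVanishes X Y (d + 1)) :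
    HasResolution (finiteProjectives R) d X := by
  induction d generalizing X with
  | zero =>
    obtain ⟨n, p, hp⟩ := Module.Finite.exists_fin' R X
    obtain ⟨s, hs⟩ := exists_section_of_extVanishes (M := ModuleCat.of R (Fin n → R)) p hp
      (h _ (inferInstanceAs (Module.Finite R (LinearMap.ker p))))
    exact ⟨hX, .of_split (M := Fin n → R) s p hs⟩
  | succ d ih =>
    obtain ⟨n, p, hp⟩ := Module.Finite.exists_fin' R X
    have hK := IsExtension.of_ker (M := ModuleCat.of R (Fin n → R)) p hp
    have hfin : Module.Finite R (Fin n → R) := inferInstance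
    have hproj : Module.Projective R (Fin n → R) := inferInstance
    exact ⟨_, _, hK, ⟨hfin, hproj⟩, ih (hK.finite_left hfin) fun Y hY =>
      hK.extVanishes_left (extVanishes_of_projective hproj) (h Y hY)⟩

end Resolutions

section ExactSequences

variable {S : Type} [Ring S] {C : Set (ModuleCat.{0} S)} {I M : ModuleCat.{0} S} {d : ℕ}
  {N : Fin (d + 2) → ModuleCat.{0} S} {f : ∀ i : Fin (d + 1), N i.castSucc →ₗ[S] N i.succ}

theorem IsExactSeq.exists_cons (h : IsExactSeq S d N f) (hM : IsExtension M I (N 0)) :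
    ∃ f', IsExactSeq S (d + 1) (Fin.cons M (Fin.cons I (Fin.tail N))) f' := by
  obtain ⟨hinj, hsurj, hexact⟩ := h
  obtain ⟨i, p, hi, hp, hip⟩ := hM
  refine ⟨Fin.cons (α := fun k => _ →ₗ[S] _) i
    (Fin.cons (α := fun k => _ →ₗ[S] _) (f 0 ∘ₗ p) fun k => f k.succ), hi, ?_, ?_⟩
  · cases d with
    | zero => exact hsurj.comp hp
    | succ d => exact hsurj
  · refine Fin.cases ?_ fun k => ?_
    · exact hip.linearMap_ker_eq.symm.trans (LinearMap.ker_comp_of_ker_eq_bot p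
        (LinearMap.ker_eq_bot.mpr hinj)).symm
    · cases d with
      | zero => exact k.elim0
      | succ d =>
        cases k using Fin.cases with
        | zero => exact (LinearMap.range_comp_of_range_eq_top (f 0)
            (LinearMap.range_eq_top.mpr hp)).trans (hexact 0)
        | succ k => exact hexact k.succ

theorem HasCoresolution.exists_isExactSeq (h : HasCoresolution C d M) :
    ∃ (N : Fin (d + 2) → ModuleCat.{0} S)
      (f : ∀ i : Fin (d + 1), N i.castSucc →ₗ[S] N i.succ),
      IsExactSeq S d N f ∧ N 0 = M ∧ ∀ i : Fin (d + 1), N i.succ ∈ C := by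
  induction d generalizing M with
  | zero =>
    exact ⟨fun _ => M, fun _ => LinearMap.id,
      ⟨Function.injective_id, Function.surjective_id, fun i => i.elim0⟩, rfl, fun _ => h⟩
  | succ d ih =>
    obtain ⟨I, K, hI, hIC, hK⟩ := h
    obtain ⟨N, f, hf, rfl, hN⟩ := ih hK
    obtain ⟨f', hf'⟩ := hf.exists_cons hI
    exact ⟨_, f', hf', rfl, Fin.cases hIC hN⟩

theorem IsExactSeq.hasCoresolution
    (hC : ∀ {A B : ModuleCat.{0} S}, (A ≃ₗ[S] B) → A ∈ C → B ∈ C) (h : IsExactSeq S d N f)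
    (hN : ∀ i : Fin (d + 1), N i.succ ∈ C) : HasCoresolution C d (N 0) := by
  obtain ⟨hinj, hsurj, hexact⟩ := h
  have hrange (j : Fin (d + 1)) :
      HasCoresolution C (d - j) (ModuleCat.of S (LinearMap.range (f j))) := by
    induction j using Fin.reverseInduction with
    | last =>
      rw [Fin.val_last, Nat.sub_self]
      exact hC ((LinearEquiv.ofEq _ _ (LinearMap.range_eq_top.mpr hsurj)).trans
        Submodule.topEquiv).symm (hN (Fin.last d))
    | cast j ih =>
      have hker : LinearMap.ker (f j.succ).rangeRestrict = LinearMap.range (f j.castSucc) :=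
        (f j.succ).ker_rangeRestrict.trans (hexact j).symm
      have hext : IsExtension (ModuleCat.of S (LinearMap.range (f j.castSucc))) (N j.succ.castSucc)
          (ModuleCat.of S (LinearMap.range (f j.succ))) :=
        (IsExtension.of_ker (B := ModuleCat.of S _) (f j.succ).rangeRestrict
          (f j.succ).surjective_rangeRestrict).congr (LinearEquiv.ofEq _ _ hker) (.refl S _)
          (.refl S _)
      have hsub : d - j.castSucc = d - j.succ + 1 := by
        rw [Fin.val_castSucc, Fin.val_succ]
        omega
      rw [hsub]
      exact ⟨_, _, hext, hN j.castSucc, ih⟩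
  exact (hrange 0).congr hC (LinearEquiv.ofInjective (f 0) hinj).symm

end ExactSequences

section FiltrationDimension

variable {S : Type} [Ring S] {Λ : Type} [Fintype Λ] [PartialOrder Λ] {Q : QHData S Λ}
  {M : ModuleCat.{0} S} {d n : ℕ}

theorem gfdLE_iff_hasCoresolution :
    GfdLE S Q M d ↔ HasCoresolution {N | FilteredBy (Set.range Q.costd) N} d M := by
  constructor
  · rintro ⟨N, f, hf, rfl, hN⟩
    exact hf.hasCoresolution (fun e h => FilteredBy.congr h e)
      fun i => inCostdFilt_iff_filteredBy.mp (hN i)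
  · intro h
    obtain ⟨N, f, hf, hM, hN⟩ := h.exists_isExactSeq
    exact ⟨N, f, hf, hM, fun i => inCostdFilt_iff_filteredBy.mpr (hN i)⟩

theorem GfdLE.extVanishes_std (h : GfdLE S Q M d) (lam : Λ) (hn : d < n) :
    ExtVanishes (Q.std lam) M n := by
  refine (gfdLE_iff_hasCoresolution.mp h).extVanishes (fun Y hY m => hY.extVanishes_to ?_) hn
  rintro _ ⟨mu, rfl⟩
  exact Q.extVanishes_std_costd lam mu m

end FiltrationDimension

/-! ### Dualities -/

section Dualities

variable {S : Type} [Ring S] {Λ : Type} [Fintype Λ] [PartialOrder Λ] {Q : QHData S Λ}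
  {A B M X : ModuleCat.{0} S} {lam : Λ} {d : ℕ}

attribute [local instance] QHData.simpleL

theorem IsInjHull.nonempty_equiv {I J M N : ModuleCat.{0} S} (hI : IsInjHull S I M)
    (hJ : IsInjHull S J N) (e : M ≃ₗ[S] N) : Nonempty (I ≃ₗ[S] J) := by
  obtain ⟨hinjI, i, hi, hessI⟩ := hI
  obtain ⟨hinjJ, j, hj, hessJ⟩ := hJ
  obtain ⟨b, hb⟩ := hinjJ.out i hi (j ∘ₗ e.toLinearMap)
  have hb_inj : Function.Injective b := by
    refine LinearMap.ker_eq_bot.mp (hessI _ (eq_bot_iff.mpr ?_))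
    rintro _ ⟨hx, y, rfl⟩
    have hjy : (j ∘ₗ e.toLinearMap) y = 0 := (hb y).symm.trans (LinearMap.mem_ker.mp hx)
    have hy : y = 0 := (hj.comp e.injective) (hjy.trans (map_zero (j ∘ₗ e.toLinearMap)).symm)
    rw [hy, map_zero]
    exact zero_mem _
  obtain ⟨r, hr⟩ := hinjI.out b hb_inj LinearMap.id
  have hr_inj : Function.Injective r := by
    refine LinearMap.ker_eq_bot.mp (hessJ _ (eq_bot_iff.mpr ?_))
    rintro _ ⟨hx, y, rfl⟩
    obtain ⟨y, rfl⟩ := e.surjective y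
    have hbi : b (i y) = j (e y) := hb y
    have hy : i y = 0 := by rw [← LinearMap.mem_ker.mp hx, ← hbi, hr, LinearMap.id_apply]
    rw [hi (hy.trans (map_zero i).symm), map_zero, map_zero]
    exact zero_mem _
  exact ⟨(LinearEquiv.ofBijective r ⟨hr_inj, fun x => ⟨b x, hr x⟩⟩).symm⟩

namespace Duality

variable (F : Duality S Q)

theorem map_zero (hA : Module.Finite S A) (hB : Module.Finite S B) :
    F.Dmap (0 : A →ₗ[S] B) = 0 := by
  simpa using F.Dadd hA hB 0 0

theorem subsingleton (hA : Subsingleton A) : Subsingleton (F.D A) := by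
  have hfin : Module.Finite S A := inferInstance
  have hid : (LinearMap.id : F.D A →ₗ[S] F.D A) = 0 := by
    rw [← F.Did A hfin, ← F.map_zero hfin hfin]
    exact congrArg _ (Subsingleton.elim _ _)
  exact subsingleton_of_forall_eq 0 fun x => LinearMap.congr_fun hid x

theorem nontrivial (hfin : Module.Finite S A) (hA : Nontrivial A) : Nontrivial (F.D A) := by
  refine not_subsingleton_iff_nontrivial.mp fun h => not_subsingleton A ?_
  obtain ⟨e⟩ := F.Dinvol A hfin
  have := F.subsingleton h
  exact e.symm.toEquiv.subsingleton

theorem surjective_map (hA : Module.Finite S A) (hB : Module.Finite S B) {f : A →ₗ[S] B}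
    (hf : Function.Injective f) : Function.Surjective (F.Dmap f) :=
  (F.Dexact (C := ModuleCat.of S (B ⧸ LinearMap.range f)) hA hB
    (inferInstanceAs (Module.Finite S (B ⧸ LinearMap.range f))) f (LinearMap.range f).mkQ hf
    (Submodule.mkQ_surjective _) (Submodule.ker_mkQ _).symm).2.1

variable [IsNoetherianRing S]

theorem isExtension (hM : Module.Finite S M) (h : IsExtension A M B) :
    IsExtension (F.D B) (F.D M) (F.D A) := by
  have hA := h.finite_left hM
  obtain ⟨i, p, hi, hp, hip⟩ := h
  obtain ⟨hi', hp', hip'⟩ := F.Dexact hA hM (.of_surjective p hp) i p hi hp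
    hip.linearMap_ker_eq.symm
  exact ⟨F.Dmap p, F.Dmap i, hi', hp', LinearMap.exact_iff.mpr hip'.symm⟩

theorem injective_map (hA : Module.Finite S A) {f : A →ₗ[S] B} (hf : Function.Surjective f) :
    Function.Injective (F.Dmap f) :=
  (F.Dexact (A := ModuleCat.of S (LinearMap.ker f))
    (inferInstanceAs (Module.Finite S (LinearMap.ker f))) hA (.of_surjective f hf)
    (LinearMap.ker f).subtype f (Submodule.injective_subtype _) hf (Submodule.range_subtype _)).1

theorem injective_of_surjective_map (hA : Module.Finite S A) (hB : Module.Finite S B)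
    {f : A →ₗ[S] B} (hf : Function.Surjective (F.Dmap f)) : Function.Injective f := by
  have hK : Module.Finite S (ModuleCat.of S (LinearMap.ker f)) :=
    inferInstanceAs (Module.Finite S (LinearMap.ker f))
  let i : ModuleCat.of S (LinearMap.ker f) →ₗ[S] A := (LinearMap.ker f).subtype
  have hcomp : F.Dmap i ∘ₗ F.Dmap f = 0 := by
    rw [← F.Dcomp hK hA hB, ← F.map_zero hK hB]
    exact congrArg _ (LinearMap.ext fun x => x.2)
  have hi : i = 0 := by
    refine (F.Dfull hK hA).1 (?_ : F.Dmap i = F.Dmap 0)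
    rw [F.map_zero hK hA]
    exact (LinearMap.cancel_right hf).mp (hcomp.trans (LinearMap.zero_comp _).symm)
  exact (injective_iff_map_eq_zero f).mpr fun x hx => LinearMap.congr_fun hi ⟨x, hx⟩

theorem injective_of_mem_finiteProjectives (hP : X ∈ finiteProjectives S) :
    Module.Injective S (F.D X) := by
  obtain ⟨hfin, hproj⟩ := hP
  refine Module.Baer.injective fun J g => ?_
  have hJ : Module.Finite S (ModuleCat.of S J) := inferInstanceAs (Module.Finite S J)
  have hS : Module.Finite S (ModuleCat.of S S) := inferInstanceAs (Module.Finite S S)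
  have hDX := F.finD X hfin
  obtain ⟨e⟩ := F.Dinvol X hfin
  have hDDX : Module.Projective S (F.D (F.D X)) := .of_equiv e.symm
  let i : ModuleCat.of S J →ₗ[S] ModuleCat.of S S := J.subtype
  obtain ⟨l, hl⟩ := Module.projective_lifting_property (F.Dmap i)
    (F.Dmap (A := ModuleCat.of S J) g) (F.surjective_map hJ hS J.injective_subtype)
  obtain ⟨g', rfl⟩ : ∃ g', F.Dmap g' = l := (F.Dfull hS hDX).2 l
  have hext : g' ∘ₗ i = g := by
    refine (F.Dfull hJ hDX).1 ?_
    exact (F.Dcomp hJ hS hDX i g').trans hl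
  exact ⟨g', fun x hx => LinearMap.congr_fun hext ⟨x, hx⟩⟩

theorem factorsLE (hM : Module.Finite S M) (h : Q.FactorsLE lam M) : Q.FactorsLE lam (F.D M) := by
  rintro mu ⟨U, V, -, ⟨e⟩⟩
  have hDM := F.finD M hM
  have hV : Module.Finite S (ModuleCat.of S V) := inferInstanceAs (Module.Finite S V)
  let p : ModuleCat.of S V →ₗ[S] Q.L mu := e.toLinearMap ∘ₗ (U.comap V.subtype).mkQ
  have hp : Function.Surjective p := e.surjective.comp (Submodule.mkQ_surjective _)
  obtain ⟨eL⟩ := F.DL mu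
  obtain ⟨eM⟩ := F.Dinvol M hM
  have hDV : IsCompFactor S (Q.L mu) (F.D (ModuleCat.of S V)) :=
    (Q.projCover mu).isCompFactor_of_injective (i := F.Dmap p ∘ₗ eL.symm.toLinearMap)
      ((F.injective_map hV hp).comp eL.symm.injective) (Q.isCompFactor_L_self mu)
  exact h mu ((Q.projCover mu).isCompFactor_of_surjective
    (p := F.Dmap (A := ModuleCat.of S V) V.subtype ∘ₗ eM.symm.toLinearMap)
    ((F.surjective_map hV hDM V.injective_subtype).comp eM.symm.surjective) hDV)

theorem isInjHull_map {P L : ModuleCat.{0} S} (hP : IsProjCover S P L)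
    [IsSimpleModule S L] :
    IsInjHull S (F.D P) (F.D L) := by
  have hfin := hP.finite
  obtain ⟨hproj, π, hπ, -⟩ := id hP
  have hL : Module.Finite S L := .of_surjective π hπ
  have hDP := F.finD P hfin
  have hDL := F.finD L hL
  refine ⟨F.injective_of_mem_finiteProjectives ⟨hfin, hproj⟩, F.Dmap π, F.injective_map hfin hπ,
    fun N hN => ?_⟩
  let c : F.D P →ₗ[S] ModuleCat.of S (F.D P ⧸ N) := N.mkQ
  have hquot : Module.Finite S (ModuleCat.of S (F.D P ⧸ N)) :=
    inferInstanceAs (Module.Finite S (F.D P ⧸ N))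
  have hcπ : Function.Injective (c ∘ₗ F.Dmap π) := by
    refine (injective_iff_map_eq_zero _).mpr fun x hx => ?_
    have hmem : F.Dmap π x ∈ N ⊓ LinearMap.range (F.Dmap π) :=
      ⟨(Submodule.Quotient.mk_eq_zero N).mp hx, LinearMap.mem_range_self _ x⟩
    rw [hN, Submodule.mem_bot] at hmem
    exact F.injective_map hfin hπ (hmem.trans (LinearMap.map_zero _).symm)
  obtain ⟨e⟩ := F.Dinvol P hfin
  have := F.nontrivial hDL (F.nontrivial hL (IsSimpleModule.nontrivial S L))
  have hsurj : Function.Surjective (F.Dmap (F.Dmap π) ∘ₗ F.Dmap c) := by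
    rw [← F.Dcomp hDL hDP hquot]
    exact F.surjective_map hDL hquot hcπ
  have hec : Function.Surjective (e.toLinearMap ∘ₗ F.Dmap c) := by
    refine hP.surjective_of_comp (h := F.Dmap (F.Dmap π) ∘ₗ e.symm.toLinearMap) ?_
    convert hsurj using 2
    ext x
    simp
  have hc : Function.Injective c :=
    F.injective_of_surjective_map hDP hquot ((e.comp_surjective _).mp hec)
  rw [← N.ker_mkQ]
  exact LinearMap.ker_eq_bot.mpr hc

theorem nonempty_D_P_equiv_I (lam : Λ) : Nonempty (F.D (Q.P lam) ≃ₗ[S] Q.I lam) := by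
  obtain ⟨e⟩ := F.DL lam
  exact (F.isInjHull_map (Q.projCover lam)).nonempty_equiv (Q.injHull lam) e

theorem exists_injective_D_std (lam : Λ) :
    ∃ j : F.D (Q.std lam) →ₗ[S] Q.costd lam, Function.Injective j := by
  obtain ⟨e⟩ := F.nonempty_D_P_equiv_I lam
  obtain ⟨q, hq⟩ := Q.exists_surjective_std (lam := lam)
  exact (F.factorsLE (Q.finite_std lam) (Q.factorsLE_std lam)).exists_injective_to_costd
    (i := e.toLinearMap ∘ₗ F.Dmap q)
    (e.injective.comp (F.injective_map (Q.projCover lam).finite hq))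

theorem finite_costd (F : Duality S Q) (lam : Λ) : Module.Finite S (Q.costd lam) := by
  obtain ⟨e⟩ := F.nonempty_D_P_equiv_I lam
  obtain ⟨i, hi⟩ := Q.exists_injective_costd (lam := lam)
  have := F.finD _ (Q.projCover lam).finite
  exact .of_injective (e.symm.toLinearMap ∘ₗ i) (e.symm.injective.comp hi)

theorem exists_surjective_D_costd (lam : Λ) :
    ∃ r : Q.std lam →ₗ[S] F.D (Q.costd lam), Function.Surjective r := by
  have hP := (Q.projCover lam).finite
  have hcostd := F.finite_costd lam
  obtain ⟨e⟩ := F.nonempty_D_P_equiv_I lam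
  obtain ⟨eP⟩ := F.Dinvol _ hP
  obtain ⟨i, hi⟩ := Q.exists_injective_costd (lam := lam)
  have hei : Function.Injective (e.symm.toLinearMap ∘ₗ i) := e.symm.injective.comp hi
  exact (F.factorsLE hcostd (Q.factorsLE_costd lam)).exists_surjective_from_std
    (p := F.Dmap (e.symm.toLinearMap ∘ₗ i) ∘ₗ eP.symm.toLinearMap)
    ((F.surjective_map hcostd (F.finD _ hP) hei).comp eP.symm.surjective)

-- The surjections `Δ ↠ D∇` and `D∇ ↠ DDΔ ≅ Δ` are bijective because `Δ` is Noetherian.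
theorem nonempty_D_std_equiv_costd (lam : Λ) : Nonempty (F.D (Q.std lam) ≃ₗ[S] Q.costd lam) := by
  have hstd := Q.finite_std lam
  have hcostd := F.finite_costd lam
  obtain ⟨j, hj⟩ := F.exists_injective_D_std lam
  obtain ⟨r, hr⟩ := F.exists_surjective_D_costd lam
  obtain ⟨estd⟩ := F.Dinvol _ hstd
  obtain ⟨ecostd⟩ := F.Dinvol _ hcostd
  have hDj : Function.Surjective (estd.toLinearMap ∘ₗ F.Dmap j) :=
    estd.surjective.comp (F.surjective_map (F.finD _ hstd) hcostd hj)
  have hr_inj : Function.Injective r := .of_comp (f := estd.toLinearMap ∘ₗ F.Dmap j)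
    (IsNoetherian.injective_of_surjective_endomorphism ((estd.toLinearMap ∘ₗ F.Dmap j) ∘ₗ r)
      (hDj.comp hr))
  exact ⟨(LinearEquiv.ofBijective (F.Dmap r)
    ⟨F.injective_map hstd hr, F.surjective_map hstd (F.finD _ hcostd) hr_inj⟩).symm.trans ecostd⟩

theorem filteredBy_costd (hM : Module.Finite S M) (h : FilteredBy (Set.range Q.std) M) :
    FilteredBy (Set.range Q.costd) (F.D M) := by
  induction h with
  | of_subsingleton h => exact .of_subsingleton (F.subsingleton h)
  | extension _ hM' hB ih =>
    obtain ⟨lam, rfl⟩ := hB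
    obtain ⟨e⟩ := F.nonempty_D_std_equiv_costd lam
    have hcostd : FilteredBy (Set.range Q.costd) (Q.costd lam) := .of_mem ⟨lam, rfl⟩
    exact (hcostd.congr e.symm).of_extension (F.isExtension hM hM') (ih (hM'.finite_left hM))

theorem hasCoresolution {C C' : Set (ModuleCat.{0} S)} {d : ℕ}
    (hC : ∀ P ∈ C, Module.Finite S P ∧ F.D P ∈ C') (h : HasResolution C d M) :
    HasCoresolution C' d (F.D M) := by
  induction d generalizing M with
  | zero => exact (hC M h).2
  | succ d ih =>
    obtain ⟨K, P, hext, hP, hK⟩ := h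
    exact ⟨_, _, F.isExtension (hC P hP).1 hext, (hC P hP).2, ih hK⟩

end Duality

end Dualities

section GoodFiltrationDimension

variable {S : Type} [Ring S] [IsArtinianRing S] {Λ : Type} [Fintype Λ] [PartialOrder Λ]
  {Q : QHData S Λ}

namespace Duality

theorem exists_forall_finite_gfdLE (F : Duality S Q) :
    ∃ n, ∀ M : ModuleCat.{0} S, Module.Finite S M → GfdLE S Q M n := by
  obtain ⟨n, hn⟩ := Q.exists_forall_finite_hasProjectiveDimensionLT
  refine ⟨n, fun M hM => gfdLE_iff_hasCoresolution.mpr ?_⟩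
  have hDM := F.finD M hM
  have := hn (F.D M) hDM
  have hres : HasResolution (finiteProjectives S) n (F.D M) :=
    hasResolution_finiteProjectives hDM fun Y _ =>
      HasProjectiveDimensionLT.subsingleton (F.D M) n (n + 1) (Nat.le_succ n) Y
  obtain ⟨e⟩ := F.Dinvol M hM
  refine (F.hasCoresolution ?_ hres).congr (fun e h => FilteredBy.congr h e) e
  rintro P ⟨hfin, hproj⟩
  exact ⟨hfin, F.filteredBy_costd hfin (Q.filteredBy_std_of_projective hproj)⟩

theorem injdim_costd_le_gfdAlg (F : Duality S Q) (lam : Λ) :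
    injdim S (Q.costd lam) ≤ gfdAlg S Q := by
  obtain ⟨n, hn⟩ := F.exists_forall_finite_gfdLE
  have hbdd : BddAbove {d | ∃ M : ModuleCat.{0} S, Module.Finite S M ∧ gfd S Q M = d} := by
    refine ⟨n, ?_⟩
    rintro _ ⟨M, hM, rfl⟩
    exact Nat.sInf_le (hn M hM)
  have hext (Y : ModuleCat.{0} S) (hY : Module.Finite S Y) :
      ExtVanishes (Q.std lam) Y (gfdAlg S Q + 1) := by
    have hgfd : GfdLE S Q Y (gfd S Q Y) := Nat.sInf_mem (s := {d | GfdLE S Q Y d}) ⟨n, hn Y hY⟩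
    exact hgfd.extVanishes_std lam (Nat.lt_succ_of_le (le_csSup hbdd ⟨Y, hY, rfl⟩))
  have hres := hasResolution_finiteProjectives (Q.finite_std lam) hext
  have hcores : HasCoresolution {J | Module.Injective S J} (gfdAlg S Q) (F.D (Q.std lam)) :=
    F.hasCoresolution (fun P hP => ⟨hP.1, F.injective_of_mem_finiteProjectives hP⟩) hres
  obtain ⟨e⟩ := F.nonempty_D_std_equiv_costd lam
  exact Nat.sInf_le (hcores.congr (fun e h =>
    (Module.Baer.of_equiv e (Module.Baer.of_injective h)).injective) e).exists_isExactSeq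

end Duality

end GoodFiltrationDimension

end QHPaper

open QHPaper in
theorem stmt17_general {S Λ : Type} [Ring S] [IsArtinianRing S] [Fintype Λ] [PartialOrder Λ]
    (QH : QHData S Λ) (dual : Duality S QH) (hC : PropC S QH) : PropB S QH ↔ PropE S QH := by
  refine forall₃_congr fun mu lam _ => ?_
  have hmu := dual.injdim_costd_le_gfdAlg mu
  have hlam := dual.injdim_costd_le_gfdAlg lam
  rw [hC mu, hC lam]
  omega

open QHPaper in
/-- Let `S` be a connected quasi-hereditary algebra with a simple-preserving
duality whose partial order is minimal for the quasi-hereditary structure. If `S` satisfies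
property C, then property B holds if and only if property E holds. -/
theorem stmt17 (k S Λ : Type) [Field k] [Ring S] [Algebra k S] [FiniteDimensional k S]
    [Fintype Λ] [PartialOrder Λ]
    (hconn : ConnectedRing S)
    (QH : QHData S Λ) (dual : Duality S QH) (hmin : MinimalOrder S QH)
    (hC : PropC S QH) :
    PropB S QH ↔ PropE S QH := by
  have := IsArtinianRing.of_finite k S
  exact stmt17_general QH dual hC
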